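/- Let C be a Jacobi matrix with weights {a_n} and diagonal {b_n}. Assume: (a) a_n → ∞; (b) ∑_{n≥0} 1/a_n = ∞; (c) ∑_{n≥0} [ a_{n+1}/a_n − 1 ]⁻ < ∞; (d) lim_{n→∞} (a_{n−1} − b_n + a_n) = M for some M ∈ ℝ. Then σ_ess(C) = [−M, ∞). -/

import Mathlib

/-!
Write `(Dx)ₙ = xₙ + xₙ₊₁` and `dₙ = bₙ - aₙ₋₁ - aₙ` (with `a₋₁ = 0`). Then `C = D* a D + d` with
`d → -M`, so `C` should be thought of as a nonnegative operator plus `-M` plus a perturbation that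
vanishes at infinity. Carleman's condition `∑ 1 / a = ∞` makes the boundary terms of summation by
parts negligible along a subsequence; on the maximal domain this yields the energy inequality
`∑ a |Dx|² ≤ Re ⟨x, Cx⟩ - ∑ d |x|²` (`energy_le`) and the orthogonality of eigenvectors
(`green_zero`).

Nothing accumulates outside `[-M, ∞)` (`essSpectrum_subset`). A non-real `l` is in the resolvent
set (`real_of_mem_spectrum`): `C - l` is injective since an eigenvector would be orthogonal to its
own conjugate, and surjective because finite sections are uniformly bounded below and a solution is
determined by its first entry (`exists_solution`). For real `l < -M` a tail of `C - l` is coercive,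
hence solvable, and its solutions extend one step at a time to the left; so a point of the spectrum
there is an eigenvalue (`eigen_of_mem_spectrum`). Eigenvalues below `-M` do not cluster, because the
difference of two normalized eigenvectors with nearby eigenvalues is small on the first coordinates
while the form of `C - l` is coercive on the others (`eigen_isolated`).

Every `l = δ - M` with `δ > 0` is in the spectrum (`mem_spectrum`). Otherwise `C - l` has a bounded
inverse by the open mapping theorem (`bounded_inverse`). The dual equation `a D D* w = δ w` has
approximate solutions in the norm `∑ |·|² / a`: on a window of length of order `√a` times a large
constant on which `a` is nearly equal to a constant `A`, take `wₙ = (-ζ)ⁿ φₙ` with `φ` a smooth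
cutoff, `|ζ| = 1` and `2 - 2 Re ζ = δ / A` (`exists_trial`). Such windows exist arbitrarily far out,
because otherwise the almost increasing sequence `a` would grow geometrically from window to window
and `∑ 1 / a` would converge (`exists_window`). Pairing `u = D* w` with `v = (C - l)⁻¹ ū` gives `‖u‖²`
on one side and, by the energy inequality for `v`, at most `3/4 ‖u‖²` on the other. Hence `(-M, ∞)`
lies in the spectrum and every point of `[-M, ∞)` is an accumulation point of it.
-/

open Filter Topology

noncomputable section

/-- Membership in the weighted ℓ² space with weight `w`. -/
def MemL2w (w : ℕ → ℝ) (f : ℕ → ℂ) : Prop :=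
  Summable fun n => w n * ‖f n‖ ^ 2

/-- The weighted ℓ² inner product. -/
def innerW (w : ℕ → ℝ) (f g : ℕ → ℂ) : ℂ :=
  ∑' n, (w n : ℂ) * star (f n) * g n

/-- The formal tridiagonal action of the Jacobi matrix with off-diagonal entries `a`
and diagonal entries `b`:  `(Cx)₀ = b₀x₀ + a₀x₁`,
`(Cx)ₙ = aₙ₋₁xₙ₋₁ + bₙxₙ + aₙxₙ₊₁` for `n ≥ 1`. -/
def jacobiAct (a b : ℕ → ℝ) (x : ℕ → ℂ) : ℕ → ℂ
  | 0 => (b 0 : ℂ) * x 0 + (a 0 : ℂ) * x 1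
  | n + 1 => (a n : ℂ) * x n + (b (n + 1) : ℂ) * x (n + 1) + (a (n + 1) : ℂ) * x (n + 2)

/-- The maximal domain of the formal operator `T` inside the weighted ℓ² space. -/
def DomW (w : ℕ → ℝ) (T : (ℕ → ℂ) → ℕ → ℂ) : Set (ℕ → ℂ) :=
  {x | MemL2w w x ∧ MemL2w w (T x)}

/-- `T`, on its maximal domain in weighted ℓ², is self-adjoint:
the graph of the adjoint operator coincides with the graph of `T`. -/
def IsSelfAdjointW (w : ℕ → ℝ) (T : (ℕ → ℂ) → ℕ → ℂ) : Prop :=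
  ∀ y z : ℕ → ℂ, MemL2w w y → MemL2w w z →
    ((∀ x ∈ DomW w T, innerW w (T x) y = innerW w x z) ↔ (y ∈ DomW w T ∧ T y = z))

/-- The point spectrum (set of eigenvalues) of `T` on its maximal domain. -/
def eigenW (w : ℕ → ℝ) (T : (ℕ → ℂ) → ℕ → ℂ) : Set ℂ :=
  {l | ∃ x ∈ DomW w T, x ≠ 0 ∧ T x = fun n => l * x n}

/-- The spectrum of `T`: those `l` for which `T - l` is not a bijection from the maximal
domain onto the weighted ℓ² space (for a closed operator this is the usual spectrum). -/
def spectrumW (w : ℕ → ℝ) (T : (ℕ → ℂ) → ℕ → ℂ) : Set ℂ :=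
  {l | ¬ ((∀ x ∈ DomW w T, T x = (fun n => l * x n) → x = 0) ∧
          ∀ y : ℕ → ℂ, MemL2w w y → ∃ x ∈ DomW w T, (fun n => T x n - l * x n) = y)}

/-- The essential spectrum: the set of accumulation points of the spectrum. -/
def essSpectrumW (w : ℕ → ℝ) (T : (ℕ → ℂ) → ℕ → ℂ) : Set ℂ :=
  {z | AccPt z (𝓟 (spectrumW w T))}

/-! ### Summation by parts and the energy inequality -/

/-- The ℓ² condition with the constant weight `1`, without the factor `1`. -/
lemma memL2_iff (f : ℕ → ℂ) : MemL2w (fun _ => 1) f ↔ Summable fun n => ‖f n‖ ^ 2 := by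
  simp [MemL2w]

/-- The edge operator `(Dx)ₙ = xₙ + xₙ₊₁`. -/
def edge (x : ℕ → ℂ) (n : ℕ) : ℂ := x n + x (n + 1)

/-- The formal transpose of `edge`: `(D*w)₀ = w₀`, `(D*w)ₙ = wₙ₋₁ + wₙ`. -/
def coedge (w : ℕ → ℂ) : ℕ → ℂ
  | 0 => w 0
  | n + 1 => w n + w (n + 1)

/-- The potential `dₙ = bₙ - aₙ₋₁ - aₙ` (with `a₋₁ = 0`) in the decomposition `C = D* a D + d`. -/
def pot (a b : ℕ → ℝ) : ℕ → ℝ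
  | 0 => b 0 - a 0
  | n + 1 => b (n + 1) - a n - a (n + 1)

lemma jacobiAct_eq (a b : ℕ → ℝ) (x : ℕ → ℂ) (n : ℕ) :
    jacobiAct a b x n = coedge (fun k => (a k : ℂ) * edge x k) n + (pot a b n : ℂ) * x n := by
  cases n with
  | zero => simp only [jacobiAct, coedge, edge, pot]; push_cast; ring
  | succ n => simp only [jacobiAct, coedge, edge, pot]; push_cast; ring

/-- Summation by parts on `{0, …, N}`. -/
lemma sum_coedge_mul (w v : ℕ → ℂ) (N : ℕ) :
    ∑ n ∈ Finset.range (N + 1), coedge w n * v n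
      = ∑ n ∈ Finset.range (N + 1), w n * edge v n - w N * v (N + 1) := by
  induction N with
  | zero => simp [coedge, edge]; ring
  | succ N ih =>
    rw [Finset.sum_range_succ, ih, Finset.sum_range_succ _ (N + 1)]
    simp only [coedge, edge]; ring

lemma sum_jacobiAct_mul (a b : ℕ → ℝ) (x v : ℕ → ℂ) (N : ℕ) :
    ∑ n ∈ Finset.range (N + 1), jacobiAct a b x n * v n
      = ∑ n ∈ Finset.range (N + 1), ((a n : ℂ) * edge x n * edge v n + (pot a b n : ℂ) * x n * v n)
        - (a N : ℂ) * edge x N * v (N + 1) := by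
  have h := sum_coedge_mul (fun k => (a k : ℂ) * edge x k) v N
  simp only [jacobiAct_eq, add_mul, Finset.sum_add_distrib]
  rw [h]; ring

/-- The energy identity for a truncated vector. -/
lemma energy_finite (a b : ℕ → ℝ) (x : ℕ → ℂ) (N : ℕ) :
    ∑ n ∈ Finset.range (N + 1), jacobiAct a b x n * star (x n)
      = ((∑ n ∈ Finset.range (N + 1), (a n * ‖edge x n‖ ^ 2 + pot a b n * ‖x n‖ ^ 2) : ℝ) : ℂ)
        - (a N : ℂ) * edge x N * star (x (N + 1)) := by
  rw [sum_jacobiAct_mul a b x (fun n => star (x n)) N]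
  congr 1
  push_cast
  refine Finset.sum_congr rfl fun n _ => ?_
  have h1 : edge (fun n => star (x n)) n = star (edge x n) := by simp [edge]
  rw [h1]
  simp only [RCLike.star_def, mul_assoc, Complex.mul_conj']

/-- Carleman's condition kills boundary terms: if `aₙ fₙ` stays above a positive constant for a
summable `f`, then `∑ 1 / aₙ` converges. -/
lemma carleman_contra (a : ℕ → ℝ) (ha : ∀ n, 0 < a n) (h2 : ¬ Summable fun n : ℕ => 1 / a n)
    (f : ℕ → ℝ) (hf : Summable f) (c : ℝ) (hc : 0 < c) :
    ¬ ∀ᶠ n in atTop, c ≤ a n * f n := by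
  intro h
  obtain ⟨N, hN⟩ := eventually_atTop.1 h
  apply h2
  rw [← summable_nat_add_iff N]
  have hs := ((summable_nat_add_iff N).2 hf).mul_left (1 / c)
  refine Summable.of_nonneg_of_le (fun n => (one_div_pos.2 (ha _)).le) (fun n => ?_) hs
  have h3 := hN (n + N) (by omega)
  have h4 := ha (n + N)
  rw [div_le_iff₀ h4, one_div]
  have : 1 = c⁻¹ * c := by field_simp
  rw [this, mul_assoc]
  have : 0 < c⁻¹ := by positivity
  nlinarith

lemma summable_norm_mul {x y : ℕ → ℂ} (hx : Summable fun n => ‖x n‖ ^ 2)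
    (hy : Summable fun n => ‖y n‖ ^ 2) : Summable fun n => ‖x n‖ * ‖y n‖ := by
  refine Summable.of_nonneg_of_le (fun n => by positivity) (fun n => ?_) (hx.add hy)
  nlinarith [sq_nonneg (‖x n‖ - ‖y n‖), sq_nonneg (‖x n‖ + ‖y n‖)]

lemma energy_arith {c s α g y : ℝ} (hs : 0 ≤ s) (hα : 0 < α) (hc : 0 < c)
    (h1 : c * (1 + s) ≤ α * g * y) (h2 : α * g ^ 2 ≤ s) : c ^ 2 ≤ α * y ^ 2 := by
  have e8 : (c * (1 + s)) ^ 2 ≤ (α * g * y) ^ 2 := pow_le_pow_left₀ (by positivity) h1 2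
  have e9 : (α * g * y) ^ 2 ≤ (α * y ^ 2) * s := by
    calc (α * g * y) ^ 2 = (α * y ^ 2) * (α * g ^ 2) := by ring
      _ ≤ _ := mul_le_mul_of_nonneg_left h2 (by positivity)
  have e10 : (α * y ^ 2) * s ≤ (α * y ^ 2) * (1 + s) ^ 2 :=
    mul_le_mul_of_nonneg_left (by nlinarith) (by positivity)
  rw [mul_pow] at e8
  exact le_of_mul_le_mul_right (by linarith) (by positivity : 0 < (1 + s) ^ 2)

/-- The energy inequality on the maximal domain: `∑ aₙ |xₙ + xₙ₊₁|² ≤ Re ⟨x, Cx⟩ - ∑ dₙ |xₙ|²`.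
The boundary term in `energy_finite` cannot stay positive because of Carleman's condition. -/
lemma energy_le (a b : ℕ → ℝ) (ha : ∀ n, 0 < a n) (h2 : ¬ Summable fun n : ℕ => 1 / a n)
    (B : ℝ) (hB : ∀ n, |pot a b n| ≤ B) (x : ℕ → ℂ) (hx : Summable fun n => ‖x n‖ ^ 2)
    (hCx : Summable fun n => ‖jacobiAct a b x n‖ ^ 2) :
    (Summable fun n => (jacobiAct a b x n * star (x n)).re - pot a b n * ‖x n‖ ^ 2) ∧
    ∀ N, ∑ n ∈ Finset.range N, a n * ‖edge x n‖ ^ 2 ≤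
      ∑' n, ((jacobiAct a b x n * star (x n)).re - pot a b n * ‖x n‖ ^ 2) := by
  have hs : Summable fun n => (jacobiAct a b x n * star (x n)).re - pot a b n * ‖x n‖ ^ 2 := by
    refine Summable.sub ?_ ?_
    · refine Summable.of_norm_bounded (summable_norm_mul hCx hx) fun n => ?_
      calc ‖(jacobiAct a b x n * star (x n)).re‖ ≤ ‖jacobiAct a b x n * star (x n)‖ :=
            Complex.abs_re_le_norm _
        _ = _ := by simp
    · refine Summable.of_norm_bounded (hx.mul_left B) fun n => ?_
      rw [norm_mul, Real.norm_eq_abs, Real.norm_eq_abs, abs_of_nonneg (sq_nonneg ‖x n‖)]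
      gcongr
      exact hB n
  refine ⟨hs, ?_⟩
  set q : ℕ → ℝ := fun n => (jacobiAct a b x n * star (x n)).re - pot a b n * ‖x n‖ ^ 2 with hq
  set S : ℕ → ℝ := fun N => ∑ n ∈ Finset.range N, a n * ‖edge x n‖ ^ 2 with hS
  have hSmono : Monotone S := by
    refine monotone_nat_of_le_succ fun n => ?_
    simp only [hS, Finset.sum_range_succ]
    have := mul_nonneg (ha n).le (sq_nonneg ‖edge x n‖)
    linarith
  have hS0 : ∀ n, 0 ≤ S n := fun n => by
    have := hSmono (Nat.zero_le n); simpa [hS] using this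
  have hbd : ∀ N, S (N + 1) - ∑ n ∈ Finset.range (N + 1), q n
      = ((a N : ℂ) * edge x N * star (x (N + 1))).re := by
    intro N
    have h := congrArg Complex.re (energy_finite a b x N)
    rw [Complex.sub_re, Complex.ofReal_re, Complex.re_sum, Finset.sum_add_distrib] at h
    simp only [hq, hS, Finset.sum_sub_distrib]
    linarith
  intro N₁
  by_contra hcon
  push Not at hcon
  set Q := ∑' n, q n with hQ
  set δ := (S N₁ - Q) / 2 with hδ
  have hδ0 : 0 < δ := by simp only [hδ]; linarith
  have ht := (hs.hasSum.tendsto_sum_nat).comp (tendsto_add_atTop_nat 1)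
  have hev : ∀ᶠ N in atTop, ∑ n ∈ Finset.range (N + 1), q n < Q + δ :=
    ht.eventually (gt_mem_nhds (by linarith))
  set C₀ := |Q| + δ with hC₀
  have hC₀0 : 0 ≤ C₀ := by positivity
  set c := δ / (1 + C₀ + δ) with hc
  have hc0 : 0 < c := by positivity
  refine carleman_contra a ha h2 (fun n => ‖x (n + 1)‖ ^ 2)
    ((summable_nat_add_iff 1).2 hx) (c ^ 2) (by positivity) ?_
  filter_upwards [hev, eventually_ge_atTop N₁] with N hN hN1
  have e1 := hbd N
  have e2 : S N₁ ≤ S (N + 1) := hSmono (by omega)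
  set β := ((a N : ℂ) * edge x N * star (x (N + 1))).re with hβ
  have e3 : δ ≤ β := by linarith
  have e4 : S (N + 1) - C₀ ≤ β := by
    have := le_abs_self Q
    linarith
  have e5 : c * (1 + S (N + 1)) ≤ β := by
    rw [hc, div_mul_eq_mul_div, div_le_iff₀ (by positivity)]
    nlinarith
  have e6 : β ≤ a N * ‖edge x N‖ * ‖x (N + 1)‖ := by
    calc β ≤ ‖(a N : ℂ) * edge x N * star (x (N + 1))‖ := Complex.re_le_norm _
      _ = _ := by simp [abs_of_pos (ha N)]
  have e7 : a N * ‖edge x N‖ ^ 2 ≤ S (N + 1) := by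
    have := hS0 N
    simp only [hS, Finset.sum_range_succ] at this ⊢
    linarith
  exact energy_arith (hS0 (N + 1)) (ha N) hc0 (e5.trans e6) e7

/-- Eigenvectors to distinct eigenvalues are orthogonal for the bilinear pairing. -/
lemma green_zero (a b : ℕ → ℝ) (ha : ∀ n, 0 < a n) (h2 : ¬ Summable fun n : ℕ => 1 / a n)
    (p q : ℕ → ℂ) (hp : Summable fun n => ‖p n‖ ^ 2) (hq : Summable fun n => ‖q n‖ ^ 2)
    (l m : ℂ) (hlm : l ≠ m) (hlp : jacobiAct a b p = fun n => l * p n)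
    (hmq : jacobiAct a b q = fun n => m * q n) : ∑' n, p n * q n = 0 := by
  have hs : Summable fun n => p n * q n :=
    Summable.of_norm_bounded (summable_norm_mul hp hq) fun n => by simp
  have hfin : ∀ N, (l - m) * ∑ n ∈ Finset.range (N + 1), p n * q n
      = (a N : ℂ) * (p (N + 1) * q N - p N * q (N + 1)) := by
    intro N
    have e1 := sum_jacobiAct_mul a b p q N
    have e2 := sum_jacobiAct_mul a b q p N
    rw [hlp] at e1
    rw [hmq] at e2
    have e3 : ∑ n ∈ Finset.range (N + 1),
        ((a n : ℂ) * edge p n * edge q n + (pot a b n : ℂ) * p n * q n)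
        = ∑ n ∈ Finset.range (N + 1),
        ((a n : ℂ) * edge q n * edge p n + (pot a b n : ℂ) * q n * p n) :=
      Finset.sum_congr rfl fun n _ => by ring
    rw [Finset.mul_sum]
    have e4 : ∑ n ∈ Finset.range (N + 1), (l - m) * (p n * q n)
      = ∑ n ∈ Finset.range (N + 1), l * p n * q n
        - ∑ n ∈ Finset.range (N + 1), m * q n * p n := by
      rw [← Finset.sum_sub_distrib]
      exact Finset.sum_congr rfl fun n _ => by ring
    rw [e4, e1, e2, e3]
    simp only [edge]; ring
  by_contra hne
  have ht := (((hs.hasSum.tendsto_sum_nat).comp (tendsto_add_atTop_nat 1)).const_mul (l - m)).norm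
  have hpos : 0 < ‖(l - m) * ∑' n, p n * q n‖ :=
    norm_pos_iff.2 (mul_ne_zero (sub_ne_zero.2 hlm) hne)
  have hev := ht.eventually (lt_mem_nhds (half_lt_self hpos))
  have hp1 := (summable_nat_add_iff 1).2 hp
  have hq1 := (summable_nat_add_iff 1).2 hq
  refine carleman_contra a ha h2 (fun n => ‖p (n + 1)‖ * ‖q n‖ + ‖p n‖ * ‖q (n + 1)‖)
    ((summable_norm_mul (x := fun n => p (n + 1)) hp1 hq).add
      (summable_norm_mul (y := fun n => q (n + 1)) hp hq1)) _ (half_pos hpos) ?_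
  filter_upwards [hev] with N hN
  refine hN.le.trans ?_
  simp only [Function.comp]
  rw [hfin N, norm_mul, Complex.norm_real, Real.norm_eq_abs, abs_of_pos (ha N)]
  refine mul_le_mul_of_nonneg_left ?_ (ha N).le
  refine (norm_sub_le _ _).trans ?_
  simp

/-! ### Solving the recurrence, and the resolvent set -/

/-- The solution of `(C - l)x = y` with `x₀ = t`, given by the three-term recurrence. -/
def sol (a b : ℕ → ℝ) (l : ℂ) (y : ℕ → ℂ) (t : ℂ) : ℕ → ℂ
  | 0 => t
  | 1 => (y 0 + l * t - b 0 * t) / a 0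
  | n + 2 => (y (n + 1) + l * sol a b l y t (n + 1) - b (n + 1) * sol a b l y t (n + 1)
      - a n * sol a b l y t n) / a (n + 1)

lemma sol_spec (a b : ℕ → ℝ) (ha : ∀ n, 0 < a n) (l : ℂ) (y : ℕ → ℂ) (t : ℂ) (n : ℕ) :
    jacobiAct a b (sol a b l y t) n - l * sol a b l y t n = y n := by
  have h : ∀ n, (a n : ℂ) ≠ 0 := fun n => by exact_mod_cast (ha n).ne'
  cases n with
  | zero =>
    simp only [jacobiAct, sol]
    have := h 0
    field_simp
    ring
  | succ n =>
    simp only [jacobiAct, sol]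
    have := h (n + 1)
    field_simp
    ring

lemma sol_affine (a b : ℕ → ℝ) (l : ℂ) (y : ℕ → ℂ) (t : ℂ) (n : ℕ) :
    sol a b l y t n = sol a b l y 0 n + t * sol a b l 0 1 n := by
  induction n using Nat.strong_induction_on with
  | _ n ih =>
    match n, ih with
    | 0, _ => simp [sol]
    | 1, _ => simp only [sol, Pi.zero_apply]; ring
    | n + 2, ih =>
      rw [sol, ih (n + 1) (by omega), ih n (by omega), sol, sol]
      simp only [Pi.zero_apply]
      ring

lemma sol_unique (a b : ℕ → ℝ) (ha : ∀ n, 0 < a n) (l : ℂ) (y x : ℕ → ℂ)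
    (hx : ∀ n, jacobiAct a b x n - l * x n = y n) (n : ℕ) : x n = sol a b l y (x 0) n := by
  have h : ∀ n, (a n : ℂ) ≠ 0 := fun n => by exact_mod_cast (ha n).ne'
  induction n using Nat.strong_induction_on with
  | _ n ih =>
    match n, ih with
    | 0, _ => simp [sol]
    | 1, _ =>
      have := hx 0
      simp only [sol, jacobiAct] at this ⊢
      rw [eq_div_iff (h 0), ← this]
      ring
    | n + 2, ih =>
      rw [sol, ← ih (n + 1) (by omega), ← ih n (by omega), eq_div_iff (h _), ← hx (n + 1)]
      simp only [jacobiAct]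
      ring

lemma sol_continuous (a b : ℕ → ℝ) (n : ℕ) :
    Continuous fun l : ℂ => sol a b l 0 1 n := by
  induction n using Nat.strong_induction_on with
  | _ n ih =>
    match n, ih with
    | 0, _ => simp only [sol]; fun_prop
    | 1, _ => simp only [sol]; fun_prop
    | n + 2, ih =>
      have h1 := ih (n + 1) (by omega)
      have h0 := ih n (by omega)
      simp only [sol]
      fun_prop

/-- A uniform lower bound on the finite sections of `C - l` makes `C - l` surjective: the solutions
of the finite sections are bounded, and a limit of them solves the full equation. Since a solution
is determined by its entry at `0`, compactness is only needed for that one number. -/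
lemma exists_solution (a b : ℕ → ℝ) (ha : ∀ n, 0 < a n) (l : ℂ) (c : ℝ) (hc : 0 < c)
    (hco : ∀ N (x : ℕ → ℂ), x (N + 1) = 0 → c * ∑ n ∈ Finset.range (N + 1), ‖x n‖ ^ 2 ≤
      ‖∑ n ∈ Finset.range (N + 1), (jacobiAct a b x n - l * x n) * star (x n)‖)
    (y : ℕ → ℂ) (hy : Summable fun n => ‖y n‖ ^ 2) :
    ∃ x : ℕ → ℂ, (Summable fun n => ‖x n‖ ^ 2) ∧ ∀ n, jacobiAct a b x n - l * x n = y n := by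
  set p := sol a b l 0 1 with hp
  have hpne : ∀ N, p (N + 1) ≠ 0 := by
    intro N h
    have h1 := hco N p h
    simp only [hp, sol_spec a b ha, Pi.zero_apply, zero_mul, Finset.sum_const_zero, norm_zero] at h1
    have h2 : ‖sol a b l 0 1 0‖ ^ 2 ≤ ∑ n ∈ Finset.range (N + 1), ‖sol a b l 0 1 n‖ ^ 2 :=
      Finset.single_le_sum (f := fun n => ‖sol a b l 0 1 n‖ ^ 2)
        (fun n _ => sq_nonneg _) (by simp)
    simp only [sol, norm_one, one_pow] at h2
    nlinarith
  set Y := ∑' n, ‖y n‖ ^ 2 with hY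
  set t : ℕ → ℂ := fun N => -sol a b l y 0 (N + 1) / p (N + 1) with ht
  have htz : ∀ N, sol a b l y (t N) (N + 1) = 0 := by
    intro N
    rw [sol_affine]
    simp only [ht]
    have := hpne N
    field_simp
    simp [hp]
  have hbound : ∀ N, ∑ n ∈ Finset.range (N + 1), ‖sol a b l y (t N) n‖ ^ 2 ≤ Y / c ^ 2 := by
    intro N
    have h1 := hco N _ (htz N)
    simp only [sol_spec a b ha] at h1
    set X := ∑ n ∈ Finset.range (N + 1), ‖sol a b l y (t N) n‖ ^ 2 with hX
    have h2 : ‖∑ n ∈ Finset.range (N + 1), y n * star (sol a b l y (t N) n)‖ ≤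
        ∑ n ∈ Finset.range (N + 1), ((1 / (2 * c)) * ‖y n‖ ^ 2
          + c / 2 * ‖sol a b l y (t N) n‖ ^ 2) := by
      refine (norm_sum_le _ _).trans (Finset.sum_le_sum fun n _ => ?_)
      rw [norm_mul, norm_star]
      have h3 : 0 ≤ (1 / (2 * c)) * (‖y n‖ - c * ‖sol a b l y (t N) n‖) ^ 2 := by positivity
      have h4 : (1 / (2 * c)) * (‖y n‖ - c * ‖sol a b l y (t N) n‖) ^ 2
        = (1 / (2 * c)) * ‖y n‖ ^ 2 + c / 2 * ‖sol a b l y (t N) n‖ ^ 2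
          - ‖y n‖ * ‖sol a b l y (t N) n‖ := by
        field_simp
        ring
      linarith
    rw [Finset.sum_add_distrib, ← Finset.mul_sum, ← Finset.mul_sum] at h2
    have h5 : ∑ n ∈ Finset.range (N + 1), ‖y n‖ ^ 2 ≤ Y :=
      hy.sum_le_tsum _ fun n _ => sq_nonneg _
    have h6 : (1 / (2 * c)) * ∑ n ∈ Finset.range (N + 1), ‖y n‖ ^ 2 ≤ 1 / (2 * c) * Y :=
      mul_le_mul_of_nonneg_left h5 (by positivity)
    rw [← hX] at h2
    have h7 : c / 2 * X ≤ 1 / (2 * c) * Y := by linarith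
    rw [le_div_iff₀ (by positivity)]
    have h8 := mul_le_mul_of_nonneg_left h7 (by positivity : 0 ≤ 2 * c)
    have h9 : 2 * c * (1 / (2 * c) * Y) = Y := by field_simp
    nlinarith
  have htb : ∀ N, t N ∈ Metric.closedBall (0 : ℂ) (√(Y / c ^ 2)) := by
    intro N
    rw [mem_closedBall_zero_iff]
    refine Real.le_sqrt_of_sq_le (le_trans ?_ (hbound N))
    exact Finset.single_le_sum (f := fun n => ‖sol a b l y (t N) n‖ ^ 2)
        (fun n _ => sq_nonneg _) (by simp : 0 ∈ Finset.range (N + 1))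
  obtain ⟨τ, -, φ, hφ, hτ⟩ := tendsto_subseq_of_bounded Metric.isBounded_closedBall htb
  refine ⟨sol a b l y τ, ?_, sol_spec a b ha l y τ⟩
  refine summable_of_sum_range_le (c := Y / c ^ 2) (fun n => sq_nonneg _) fun m => ?_
  have hlim : Tendsto (fun j => ∑ n ∈ Finset.range m, ‖sol a b l y (t (φ j)) n‖ ^ 2) atTop
      (𝓝 (∑ n ∈ Finset.range m, ‖sol a b l y τ n‖ ^ 2)) := by
    refine tendsto_finsetSum _ fun n _ => ?_
    simp only [sol_affine a b l y (t _), sol_affine a b l y τ]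
    exact (((hτ.mul_const _).const_add _).norm).pow 2
  refine le_of_tendsto hlim ?_
  filter_upwards [eventually_ge_atTop m] with j hj
  refine le_trans ?_ (hbound (φ j))
  refine Finset.sum_le_sum_of_subset_of_nonneg ?_ fun n _ _ => sq_nonneg _
  have := hφ.id_le j
  exact Finset.range_subset_range.2 (by simp at this; omega)

lemma section_form (a b : ℕ → ℝ) (l : ℂ) (N : ℕ) (x : ℕ → ℂ) (hx : x (N + 1) = 0) :
    ∑ n ∈ Finset.range (N + 1), (jacobiAct a b x n - l * x n) * star (x n)
      = ((∑ n ∈ Finset.range (N + 1), (a n * ‖edge x n‖ ^ 2 + pot a b n * ‖x n‖ ^ 2) : ℝ) : ℂ)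
        - l * ((∑ n ∈ Finset.range (N + 1), ‖x n‖ ^ 2 : ℝ) : ℂ) := by
  have h := energy_finite a b x N
  rw [hx, star_zero, mul_zero, sub_zero] at h
  rw [← h]
  push_cast
  rw [Finset.mul_sum, ← Finset.sum_sub_distrib]
  refine Finset.sum_congr rfl fun n _ => ?_
  rw [sub_mul, mul_assoc l]
  simp only [RCLike.star_def, Complex.mul_conj']

lemma surj_of_im_ne (a b : ℕ → ℝ) (ha : ∀ n, 0 < a n) (l : ℂ) (hl : l.im ≠ 0)
    (y : ℕ → ℂ) (hy : Summable fun n => ‖y n‖ ^ 2) :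
    ∃ x : ℕ → ℂ, (Summable fun n => ‖x n‖ ^ 2) ∧ ∀ n, jacobiAct a b x n - l * x n = y n := by
  refine exists_solution a b ha l |l.im| (abs_pos.2 hl) (fun N x hx => ?_) y hy
  rw [section_form a b l N x hx]
  refine le_trans (le_of_eq ?_) (Complex.abs_im_le_norm _)
  have h0 : 0 ≤ ∑ n ∈ Finset.range (N + 1), ‖x n‖ ^ 2 := Finset.sum_nonneg fun n _ => sq_nonneg _
  rw [Complex.sub_im, Complex.ofReal_im, Complex.im_mul_ofReal, zero_sub, abs_neg, abs_mul,
    abs_of_nonneg h0]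

lemma surj_of_pot_ge (a b : ℕ → ℝ) (ha : ∀ n, 0 < a n) (l c : ℝ) (hc : 0 < c)
    (hd : ∀ n, c ≤ pot a b n - l) (y : ℕ → ℂ) (hy : Summable fun n => ‖y n‖ ^ 2) :
    ∃ x : ℕ → ℂ, (Summable fun n => ‖x n‖ ^ 2) ∧
      ∀ n, jacobiAct a b x n - (l : ℂ) * x n = y n := by
  refine exists_solution a b ha l c hc (fun N x hx => ?_) y hy
  rw [section_form a b l N x hx]
  refine le_trans ?_ (Complex.re_le_norm _)
  rw [Complex.sub_re, Complex.ofReal_re, Complex.re_mul_ofReal, Complex.ofReal_re,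
    Finset.mul_sum, Finset.mul_sum, ← Finset.sum_sub_distrib]
  refine Finset.sum_le_sum fun n _ => ?_
  have h1 := mul_nonneg (ha n).le (sq_nonneg ‖edge x n‖)
  have h2 := mul_le_mul_of_nonneg_right (hd n) (sq_nonneg ‖x n‖)
  linarith

/-- Solvability of `(C - l)x = y` in ℓ² with the equation at index `0` dropped, together with a
nonzero ℓ² solution of the homogeneous problem (a Weyl solution). -/
def TailSolvable (a b : ℕ → ℝ) (l : ℂ) : Prop :=
  (∃ x : ℕ → ℂ, (Summable fun n => ‖x n‖ ^ 2) ∧ x ≠ 0 ∧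
    ∀ n, jacobiAct a b x (n + 1) - l * x (n + 1) = 0) ∧
  ∀ y : ℕ → ℂ, (Summable fun n => ‖y n‖ ^ 2) → ∃ x : ℕ → ℂ, (Summable fun n => ‖x n‖ ^ 2) ∧
    ∀ n, jacobiAct a b x (n + 1) - l * x (n + 1) = y (n + 1)

/-- Prepending an entry: a solution of the shifted equations extends by one step to the left. -/
lemma extend_left (a b : ℕ → ℝ) (ha : ∀ n, 0 < a n) (l : ℂ) (x y : ℕ → ℂ)
    (hx : Summable fun n => ‖x n‖ ^ 2)
    (h : ∀ n, jacobiAct (fun n => a (n + 1)) (fun n => b (n + 1)) x (n + 1) - l * x (n + 1)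
      = y (n + 2)) :
    ∃ x' : ℕ → ℂ, (∀ n, x' (n + 1) = x n) ∧ (Summable fun n => ‖x' n‖ ^ 2) ∧
      ∀ n, jacobiAct a b x' (n + 1) - l * x' (n + 1) = y (n + 1) := by
  have h0 : (a 0 : ℂ) ≠ 0 := by exact_mod_cast (ha 0).ne'
  let x' : ℕ → ℂ := fun n => match n with
    | 0 => (y 1 + l * x 0 - b 1 * x 0 - a 1 * x 1) / a 0
    | n + 1 => x n
  refine ⟨x', fun n => rfl, (summable_nat_add_iff 1).1 hx, fun n => ?_⟩
  cases n with
  | zero =>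
    simp only [jacobiAct, x']
    field_simp
    ring
  | succ n => exact h n

lemma TailSolvable.of_shift (a b : ℕ → ℝ) (ha : ∀ n, 0 < a n) (l : ℂ)
    (h : TailSolvable (fun n => a (n + 1)) (fun n => b (n + 1)) l) : TailSolvable a b l := by
  obtain ⟨⟨ψ, hψ, hψ0, hψe⟩, hs⟩ := h
  constructor
  · obtain ⟨x', h1, h2, h3⟩ := extend_left a b ha l ψ 0 hψ hψe
    refine ⟨x', h2, fun hz => hψ0 (funext fun n => ?_), h3⟩
    rw [← h1, hz]; rfl
  · intro y hy
    obtain ⟨x, hx, hxe⟩ := hs (fun n => y (n + 1)) ((summable_nat_add_iff 1).2 hy)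
    obtain ⟨x', -, h2, h3⟩ := extend_left a b ha l x y hx hxe
    exact ⟨x', h2, h3⟩

lemma TailSolvable.of_shift_iter (a b : ℕ → ℝ) (ha : ∀ n, 0 < a n) (l : ℂ) (k : ℕ)
    (h : TailSolvable (fun n => a (n + k)) (fun n => b (n + k)) l) : TailSolvable a b l := by
  induction k with
  | zero => exact h
  | succ k ih =>
    refine ih (TailSolvable.of_shift _ _ (fun n => ha _) l ?_)
    have e : ∀ n, n + 1 + k = n + (k + 1) := fun n => by omega
    simp only [e]
    exact h

/-- A form of the Fredholm alternative: either `l` is an eigenvalue, or `C - l` is surjective. -/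
lemma TailSolvable.surj (a b : ℕ → ℝ) (l : ℂ)
    (h : TailSolvable a b l)
    (hinj : ∀ x : ℕ → ℂ, (Summable fun n => ‖x n‖ ^ 2) →
      (∀ n, jacobiAct a b x n - l * x n = 0) → x = 0)
    (y : ℕ → ℂ) (hy : Summable fun n => ‖y n‖ ^ 2) :
    ∃ x : ℕ → ℂ, (Summable fun n => ‖x n‖ ^ 2) ∧ ∀ n, jacobiAct a b x n - l * x n = y n := by
  obtain ⟨⟨ψ, hψ, hψ0, hψe⟩, hs⟩ := h
  have hne : jacobiAct a b ψ 0 - l * ψ 0 ≠ 0 := by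
    intro h0
    refine hψ0 (hinj ψ hψ fun n => ?_)
    cases n with
    | zero => exact h0
    | succ n => exact hψe n
  obtain ⟨x, hx, hxe⟩ := hs y hy
  set α := (y 0 - (jacobiAct a b x 0 - l * x 0)) / (jacobiAct a b ψ 0 - l * ψ 0) with hα
  refine ⟨fun n => x n + α * ψ n, ?_, fun n => ?_⟩
  · refine Summable.of_nonneg_of_le (fun n => sq_nonneg _) (fun n => ?_)
      ((hx.mul_left 2).add (hψ.mul_left (2 * ‖α‖ ^ 2)))
    have h1 : ‖x n + α * ψ n‖ ≤ ‖x n‖ + ‖α‖ * ‖ψ n‖ := (norm_add_le _ _).trans (by simp)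
    have h2 : ‖x n + α * ψ n‖ ^ 2 ≤ (‖x n‖ + ‖α‖ * ‖ψ n‖) ^ 2 :=
      pow_le_pow_left₀ (norm_nonneg _) h1 2
    nlinarith [sq_nonneg (‖x n‖ - ‖α‖ * ‖ψ n‖)]
  · have hlin : jacobiAct a b (fun n => x n + α * ψ n) n - l * (x n + α * ψ n)
        = (jacobiAct a b x n - l * x n) + α * (jacobiAct a b ψ n - l * ψ n) := by
      cases n <;> simp only [jacobiAct] <;> ring
    rw [hlin]
    cases n with
    | zero => rw [hα, div_mul_cancel₀ _ hne]; ring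
    | succ n => rw [hxe, hψe]; ring

/-- Membership in the resolvent set in terms of plain sums. -/
lemma not_mem_spectrum (a b : ℕ → ℝ) (l : ℂ)
    (hinj : ∀ x : ℕ → ℂ, (Summable fun n => ‖x n‖ ^ 2) →
      (∀ n, jacobiAct a b x n - l * x n = 0) → x = 0)
    (hsurj : ∀ y : ℕ → ℂ, (Summable fun n => ‖y n‖ ^ 2) →
      ∃ x : ℕ → ℂ, (Summable fun n => ‖x n‖ ^ 2) ∧ ∀ n, jacobiAct a b x n - l * x n = y n) :
    l ∉ spectrumW (fun _ => 1) (jacobiAct a b) := by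
  simp only [spectrumW, Set.mem_ofPred_eq, not_not]
  refine ⟨fun x hx h => hinj x ((memL2_iff x).1 hx.1) fun n => by rw [h]; ring, fun y hy => ?_⟩
  rw [memL2_iff] at hy
  obtain ⟨x, hx, hxe⟩ := hsurj y hy
  refine ⟨x, ⟨(memL2_iff x).2 hx, (memL2_iff _).2 ?_⟩, funext hxe⟩
  refine Summable.of_nonneg_of_le (fun n => sq_nonneg _) (fun n => ?_)
      ((hy.mul_left 2).add (hx.mul_left (2 * ‖l‖ ^ 2)))
  have h0 : jacobiAct a b x n = y n + l * x n := by rw [← hxe n]; ring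
  have h1 : ‖y n + l * x n‖ ≤ ‖y n‖ + ‖l‖ * ‖x n‖ := (norm_add_le _ _).trans (by simp)
  have h2 : ‖y n + l * x n‖ ^ 2 ≤ (‖y n‖ + ‖l‖ * ‖x n‖) ^ 2 :=
    pow_le_pow_left₀ (norm_nonneg _) h1 2
  rw [h0]
  nlinarith [sq_nonneg (‖y n‖ - ‖l‖ * ‖x n‖)]

lemma jacobiAct_star (a b : ℕ → ℝ) (x : ℕ → ℂ) (n : ℕ) :
    jacobiAct a b (fun n => star (x n)) n = star (jacobiAct a b x n) := by
  cases n <;> simp [jacobiAct]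

lemma real_of_mem_spectrum (a b : ℕ → ℝ) (ha : ∀ n, 0 < a n)
    (h2 : ¬ Summable fun n : ℕ => 1 / a n) (l : ℂ)
    (hl : l ∈ spectrumW (fun _ => 1) (jacobiAct a b)) : l.im = 0 := by
  by_contra him
  refine not_mem_spectrum a b l (fun x hx hxe => ?_) (surj_of_im_ne a b ha l him) hl
  have hne : l ≠ star l := by
    intro h
    have := congrArg Complex.im h
    simp at this
    apply him; linarith
  have hx' : jacobiAct a b x = fun n => l * x n := funext fun n => sub_eq_zero.1 (hxe n)
  have hz := green_zero a b ha h2 x (fun n => star (x n)) hx (by simpa using hx) l (star l) hne hx'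
    (by funext n; rw [jacobiAct_star, hx']; simp)
  have hz' : ∑' n, ‖x n‖ ^ 2 = 0 := by
    have : (fun n => x n * star (x n)) = fun n => ((‖x n‖ ^ 2 : ℝ) : ℂ) := by
      funext n; simp [Complex.mul_conj']
    rw [this, ← Complex.ofReal_tsum] at hz
    exact_mod_cast hz
  have h0 := (hasSum_zero_iff_of_nonneg (fun n => sq_nonneg ‖x n‖)).1 (hz' ▸ hx.hasSum)
  funext n
  simpa using congrFun h0 n

/-! ### The spectrum below `-M` -/

lemma pot_tendsto (a b : ℕ → ℝ) (M : ℝ)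
    (h4 : Tendsto (fun n => a n - b (n + 1) + a (n + 1)) atTop (𝓝 M)) :
    Tendsto (pot a b) atTop (𝓝 (-M)) := by
  rw [← tendsto_add_atTop_iff_nat 1]
  refine h4.neg.congr fun n => ?_
  simp only [pot]; ring

lemma pot_bounded (a b : ℕ → ℝ) (M : ℝ) (h : Tendsto (pot a b) atTop (𝓝 (-M))) :
    ∃ B, 0 ≤ B ∧ ∀ n, |pot a b n| ≤ B := by
  obtain ⟨B, hB⟩ := (Metric.isBounded_range_of_tendsto _ h).exists_norm_le
  have hB' : ∀ n, |pot a b n| ≤ B := fun n => hB _ ⟨n, rfl⟩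
  exact ⟨B, (abs_nonneg _).trans (hB' 0), hB'⟩

/-- Below `-M`, a point of the spectrum is an eigenvalue: the polynomial solution is in ℓ². -/
lemma eigen_of_mem_spectrum (a b : ℕ → ℝ) (ha : ∀ n, 0 < a n) (M : ℝ)
    (hpot : Tendsto (pot a b) atTop (𝓝 (-M))) (l : ℝ) (hl : l < -M)
    (hs : (l : ℂ) ∈ spectrumW (fun _ => 1) (jacobiAct a b)) :
    Summable fun n => ‖sol a b l 0 1 n‖ ^ 2 := by
  by_contra hns
  have hinj : ∀ x : ℕ → ℂ, (Summable fun n => ‖x n‖ ^ 2) →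
      (∀ n, jacobiAct a b x n - l * x n = 0) → x = 0 := by
    intro x hx hxe
    have h1 := sol_unique a b ha l 0 x hxe
    have h2 : ∀ n, sol a b l 0 0 n = 0 := fun n => by
      have := sol_unique a b ha l 0 0 (fun n => by cases n <;> simp [jacobiAct]) n
      simpa using this.symm
    have h3 : ∀ n, x n = x 0 * sol a b l 0 1 n := fun n => by
      rw [h1 n, sol_affine, h2, zero_add]
    by_cases h0 : x 0 = 0
    · funext n; rw [h3 n, h0, zero_mul]; rfl
    · exfalso
      apply hns
      refine (hx.mul_left (‖x 0‖⁻¹ ^ 2)).congr fun n => ?_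
      rw [h3 n, norm_mul, mul_pow, ← mul_assoc, ← mul_pow, inv_mul_cancel₀ (norm_ne_zero_iff.2 h0)]
      simp
  refine not_mem_spectrum a b l hinj (TailSolvable.surj a b l ?_ hinj) hs
  set c := (-M - l) / 2 with hc
  have hc0 : 0 < c := by simp only [hc]; linarith
  obtain ⟨k, hk⟩ := eventually_atTop.1
    (hpot.eventually (lt_mem_nhds (show l + c < -M by simp only [hc]; linarith)))
  refine TailSolvable.of_shift_iter a b ha l (k + 1) ?_
  have hsurj := surj_of_pot_ge (fun n => a (n + (k + 1))) (fun n => b (n + (k + 1)))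
    (fun n => ha _) l c hc0 (fun n => by
      cases n with
      | zero =>
        have h1 := hk (k + 1) (by omega)
        have h2 := ha k
        simp only [pot, zero_add] at h1 ⊢
        linarith
      | succ n =>
        have h1 := hk (n + (k + 1) + 1) (by omega)
        simp only [pot] at h1 ⊢
        rw [show n + 1 + (k + 1) = n + (k + 1) + 1 by omega]
        linarith)
  constructor
  · obtain ⟨ψ, hψ, hψe⟩ := hsurj (fun n => if n = 0 then 1 else 0)
      (summable_of_ne_finset_zero (s := {0}) fun n hn => by simp at hn; simp [hn])
    refine ⟨ψ, hψ, fun h0 => ?_, fun n => by rw [hψe]; simp⟩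
    have := hψe 0
    rw [h0] at this
    simp [jacobiAct] at this
  · intro y hy
    obtain ⟨x, hx, hxe⟩ := hsurj y hy
    exact ⟨x, hx, fun n => hxe _⟩

/-- Eigenvalues below `-M` do not cluster. If `l ≠ m` are eigenvalues near `l₀`, then the normalized
eigenvectors `p`, `q` are orthogonal, so `v = p - q` satisfies `‖v‖² = ‖p‖² + ‖q‖² ≥ 1`; but
`(C - l)v = (l - m)q` is small, the form `C - l` is positive on the far coordinates, and the first
coordinates of `v` are small by continuity. -/
lemma eigen_isolated (a b : ℕ → ℝ) (ha : ∀ n, 0 < a n) (h2 : ¬ Summable fun n : ℕ => 1 / a n)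
    (M : ℝ) (hpot : Tendsto (pot a b) atTop (𝓝 (-M))) (l₀ : ℝ) (hl₀ : l₀ < -M) :
    ∃ r > 0, ∀ l m : ℝ, |l - l₀| < r → |m - l₀| < r →
      (Summable fun n => ‖sol a b l 0 1 n‖ ^ 2) → (Summable fun n => ‖sol a b m 0 1 n‖ ^ 2) →
      l = m := by
  obtain ⟨B, hB0, hB⟩ := pot_bounded a b M hpot
  set c := (-M - l₀) / 4 with hc
  have hc0 : 0 < c := by simp only [hc]; linarith
  obtain ⟨k, hk⟩ := eventually_atTop.1
    (hpot.eventually (lt_mem_nhds (show l₀ + 3 * c < -M by simp only [hc]; linarith)))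
  set K := B + |l₀| + c with hK
  have hK0 : 0 ≤ K := by positivity
  -- the first `k` coordinates of the difference of two normalized solutions
  let F : ℝ × ℝ → ℝ := fun z =>
    ∑ n ∈ Finset.range k, ‖sol a b (z.1 : ℂ) 0 1 n - sol a b (z.2 : ℂ) 0 1 n‖ ^ 2
  have hF : Continuous F := by
    refine continuous_finsetSum _ fun n _ => ?_
    have h := sol_continuous a b n
    have h1 : Continuous fun z : ℝ × ℝ => sol a b (z.1 : ℂ) 0 1 n :=
      h.comp (Complex.continuous_ofReal.comp continuous_fst)
    have h3 : Continuous fun z : ℝ × ℝ => sol a b (z.2 : ℂ) 0 1 n :=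
      h.comp (Complex.continuous_ofReal.comp continuous_snd)
    exact ((h1.sub h3).norm).pow 2
  have hF0 : F (l₀, l₀) = 0 := by simp [F]
  have hFe : ∀ᶠ z in 𝓝 (l₀, l₀), F z < c / (K + 2 * c) :=
    hF.continuousAt.eventually (gt_mem_nhds (by rw [hF0]; positivity))
  obtain ⟨r, hr, hrF⟩ := Metric.eventually_nhds_iff.1 hFe
  refine ⟨min r (c / 2), by positivity, fun l m hl hm hp hq => ?_⟩
  by_contra hne
  have hl1 := lt_of_lt_of_le hl (min_le_left _ _)
  have hl2 := lt_of_lt_of_le hl (min_le_right _ _)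
  have hm1 := lt_of_lt_of_le hm (min_le_left _ _)
  have hm2 := lt_of_lt_of_le hm (min_le_right _ _)
  have hFlm : F (l, m) < c / (K + 2 * c) := by
    apply hrF
    rw [Prod.dist_eq, Real.dist_eq, Real.dist_eq]
    exact max_lt hl1 hm1
  simp only [F] at hFlm
  set p := sol a b l 0 1 with hpdef
  set q := sol a b m 0 1 with hqdef
  have hCp : jacobiAct a b p = fun n => (l : ℂ) * p n :=
    funext fun n => sub_eq_zero.1 (sol_spec a b ha l 0 1 n)
  have hCq : jacobiAct a b q = fun n => (m : ℂ) * q n :=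
    funext fun n => sub_eq_zero.1 (sol_spec a b ha m 0 1 n)
  have horth := green_zero a b ha h2 p (fun n => star (q n)) hp (by simpa using hq) l m
    (by exact_mod_cast hne) hCp (by funext n; rw [jacobiAct_star, hCq]; simp)
  have hsum : Summable fun n => p n * star (q n) :=
    Summable.of_norm_bounded (summable_norm_mul hp hq) fun n => by simp
  set v : ℕ → ℂ := fun n => p n - q n with hv
  have hvid : ∀ n, ‖v n‖ ^ 2 = ‖p n‖ ^ 2 + ‖q n‖ ^ 2 - 2 * (p n * star (q n)).re := by
    intro n
    simp only [hv, ← Complex.normSq_eq_norm_sq, Complex.normSq_sub, RCLike.star_def]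
  have hre : HasSum (fun n => (p n * star (q n)).re) 0 := by
    have := Complex.hasSum_re hsum.hasSum
    rwa [horth] at this
  have hvs : HasSum (fun n => ‖v n‖ ^ 2) (∑' n, ‖p n‖ ^ 2 + ∑' n, ‖q n‖ ^ 2) := by
    simp only [hvid]
    simpa using (hp.hasSum.add hq.hasSum).sub (hre.mul_left 2)
  set V := ∑' n, ‖v n‖ ^ 2 with hV
  have hVeq : V = ∑' n, ‖p n‖ ^ 2 + ∑' n, ‖q n‖ ^ 2 := hvs.tsum_eq
  have hP1 : 1 ≤ ∑' n, ‖p n‖ ^ 2 := by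
    have := hp.le_tsum 0 fun n _ => sq_nonneg _
    simpa [hpdef, sol] using this
  have hQ0 : 0 ≤ ∑' n, ‖q n‖ ^ 2 := tsum_nonneg fun n => sq_nonneg _
  have hCv : ∀ n, jacobiAct a b v n = (l : ℂ) * v n + ((l - m : ℝ) : ℂ) * q n := by
    intro n
    have e : jacobiAct a b v n = jacobiAct a b p n - jacobiAct a b q n := by
      cases n <;> simp only [jacobiAct, hv] <;> ring
    rw [e, hCp, hCq]
    simp only [hv]; push_cast; ring
  have hCvs : Summable fun n => ‖jacobiAct a b v n‖ ^ 2 := by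
    refine Summable.of_nonneg_of_le (fun n => sq_nonneg _) (fun n => ?_)
      ((hvs.summable.mul_left (2 * ‖(l : ℂ)‖ ^ 2)).add
        (hq.mul_left (2 * ‖((l - m : ℝ) : ℂ)‖ ^ 2)))
    rw [hCv]
    have e1 : ‖(l : ℂ) * v n + ((l - m : ℝ) : ℂ) * q n‖
        ≤ ‖(l : ℂ)‖ * ‖v n‖ + ‖((l - m : ℝ) : ℂ)‖ * ‖q n‖ :=
      (norm_add_le _ _).trans (by rw [norm_mul, norm_mul])
    have e2 := pow_le_pow_left₀ (norm_nonneg _) e1 2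
    nlinarith [sq_nonneg (‖(l : ℂ)‖ * ‖v n‖ - ‖((l - m : ℝ) : ℂ)‖ * ‖q n‖)]
  obtain ⟨hes, hen⟩ := energy_le a b ha h2 B hB v hvs.summable hCvs
  have hen0 := hen 0
  rw [Finset.sum_range_zero] at hen0
  -- pointwise upper bound for the energy density
  have hpt : ∀ n, (jacobiAct a b v n * star (v n)).re - pot a b n * ‖v n‖ ^ 2
      ≤ (c / 2) * (‖v n‖ ^ 2 + ‖q n‖ ^ 2) - 2 * c * ‖v n‖ ^ 2
        + (if n ∈ Finset.range k then (K + 2 * c) * ‖v n‖ ^ 2 else 0) := by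
    intro n
    have e1 : (jacobiAct a b v n * star (v n)).re
        = l * ‖v n‖ ^ 2 + (l - m) * (q n * star (v n)).re := by
      rw [hCv, add_mul, mul_assoc, mul_assoc, Complex.add_re, Complex.re_ofReal_mul,
        Complex.re_ofReal_mul]
      congr 2
      rw [RCLike.star_def, Complex.mul_conj']
      norm_cast
    have e2 : (l - m) * (q n * star (v n)).re ≤ c / 2 * (‖v n‖ ^ 2 + ‖q n‖ ^ 2) := by
      have f1 : |(q n * star (v n)).re| ≤ ‖q n‖ * ‖v n‖ :=
        (Complex.abs_re_le_norm _).trans (by simp)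
      have f2 : |l - m| ≤ c := by
        rw [abs_lt] at hl2 hm2
        rw [abs_le]; constructor <;> linarith
      calc (l - m) * (q n * star (v n)).re ≤ |(l - m) * (q n * star (v n)).re| := le_abs_self _
        _ = |l - m| * |(q n * star (v n)).re| := abs_mul _ _
        _ ≤ c * (‖q n‖ * ‖v n‖) := by gcongr
        _ ≤ _ := by nlinarith [sq_nonneg (‖q n‖ - ‖v n‖)]
    rw [abs_lt] at hl2
    split_ifs with hn
    · have e3 := (abs_le.1 (hB n)).1
      have e4 := le_abs_self l₀
      have e5 : (l - pot a b n) * ‖v n‖ ^ 2 ≤ K * ‖v n‖ ^ 2 := by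
        refine mul_le_mul_of_nonneg_right ?_ (sq_nonneg _)
        simp only [hK]; linarith
      rw [e1]
      nlinarith
    · have e3 := hk n (by simpa using hn)
      have e5 : (l - pot a b n) * ‖v n‖ ^ 2 ≤ (-(2 * c)) * ‖v n‖ ^ 2 := by
        refine mul_le_mul_of_nonneg_right ?_ (sq_nonneg _)
        linarith
      rw [e1]
      nlinarith
  have hs3 : HasSum (fun n => if n ∈ Finset.range k then (K + 2 * c) * ‖v n‖ ^ 2 else 0)
      (∑ n ∈ Finset.range k, (K + 2 * c) * ‖v n‖ ^ 2) := by
    rw [← Finset.sum_congr rfl fun n hn => if_pos hn]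
    exact hasSum_sum_of_ne_finset_zero fun n hn => if_neg hn
  have hle := hasSum_le hpt hes.hasSum
    ((((hvs.summable.hasSum.add hq.hasSum).mul_left (c / 2)).sub
      (hvs.summable.hasSum.mul_left (2 * c))).add hs3)
  rw [← Finset.mul_sum, ← hV] at hle
  have hfin : (K + 2 * c) * ∑ n ∈ Finset.range k, ‖v n‖ ^ 2 < c := by
    rw [lt_div_iff₀ (by positivity)] at hFlm
    linarith
  nlinarith

/-- No accumulation point of the spectrum lies outside `[-M, ∞)`. -/
lemma essSpectrum_subset (a b : ℕ → ℝ) (ha : ∀ n, 0 < a n)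
    (h2 : ¬ Summable fun n : ℕ => 1 / a n)
    (M : ℝ) (hpot : Tendsto (pot a b) atTop (𝓝 (-M))) :
    essSpectrumW (fun _ => 1) (jacobiAct a b) ⊆ (fun r : ℝ => (r : ℂ)) '' Set.Ici (-M) := by
  intro z hz
  have hz : AccPt z (𝓟 (spectrumW (fun _ => 1) (jacobiAct a b))) := hz
  rw [accPt_iff_nhds] at hz
  have hreal := real_of_mem_spectrum a b ha h2
  have him : z.im = 0 := by
    by_contra hne
    obtain ⟨y, ⟨hy1, hy2⟩, -⟩ := hz {w | w.im ≠ 0}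
      ((isOpen_ne_fun Complex.continuous_im continuous_const).mem_nhds hne)
    exact hy1 (hreal y hy2)
  refine ⟨z.re, ?_, Complex.ext rfl (by simp [him])⟩
  by_contra hlt
  have hlt : z.re < -M := by simpa using hlt
  obtain ⟨r, hr, hiso⟩ := eigen_isolated a b ha h2 M hpot z.re hlt
  -- a punctured-ball spectral point below `-M` is a real eigenvalue
  have key : ∀ w ∈ spectrumW (fun _ => 1) (jacobiAct a b), dist w z < min r (-M - z.re) →
      |w.re - z.re| < r ∧ Summable fun n => ‖sol a b (w.re : ℝ) 0 1 n‖ ^ 2 := by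
    intro w hw hd
    have h3 : |w.re - z.re| ≤ dist w z := by
      rw [dist_eq_norm, ← Complex.sub_re]; exact Complex.abs_re_le_norm _
    have h4 := h3.trans_lt hd
    have h5 := lt_of_lt_of_le h4 (min_le_left _ _)
    have h6 := lt_of_lt_of_le h4 (min_le_right _ _)
    refine ⟨h5, eigen_of_mem_spectrum a b ha M hpot w.re ?_ ?_⟩
    · rw [abs_lt] at h6; linarith
    · have : ((w.re : ℝ) : ℂ) = w := Complex.ext rfl (by simp [hreal w hw])
      rwa [this]
  obtain ⟨w, ⟨hw1, hw2⟩, hw3⟩ := hz _ (Metric.ball_mem_nhds z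
    (lt_min hr (by linarith : 0 < -M - z.re)))
  have hw3' : 0 < dist w z := dist_pos.2 hw3
  obtain ⟨u, ⟨hu1, hu2⟩, hu3⟩ := hz _ (Metric.ball_mem_nhds z hw3')
  have hu1 : dist u z < dist w z := hu1
  obtain ⟨k1, k2⟩ := key w hw2 hw1
  obtain ⟨k3, k4⟩ := key u hu2 (hu1.trans hw1)
  have heq := hiso _ _ k1 k3 k2 k4
  have : w = u := Complex.ext heq (by rw [hreal w hw2, hreal u hu2])
  rw [this] at hu1
  exact lt_irrefl _ hu1

/-! ### Boundedness of the inverse -/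

lemma memℓp_two_iff (f : ℕ → ℂ) : Memℓp f 2 ↔ Summable fun n => ‖f n‖ ^ 2 := by
  rw [memℓp_gen_iff (by norm_num)]
  norm_num

lemma lp_norm_sq (f : lp (fun _ : ℕ => ℂ) 2) : ‖f‖ ^ 2 = ∑' n, ‖f n‖ ^ 2 := by
  have h := lp.norm_rpow_eq_tsum (p := 2) (by norm_num) f
  norm_num at h
  exact h

lemma lp_eval_continuous (n : ℕ) : Continuous fun f : lp (fun _ : ℕ => ℂ) 2 => f n :=
  (continuous_apply n).comp (lp.uniformContinuous_coe (E := fun _ : ℕ => ℂ) (p := 2)).continuous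

/-- The graph of `C - l` as a subspace of `ℓ² × ℓ²`. -/
def graphSub (a b : ℕ → ℝ) (l : ℂ) :
    Submodule ℂ (lp (fun _ : ℕ => ℂ) 2 × lp (fun _ : ℕ => ℂ) 2) where
  carrier := {z | ∀ n, jacobiAct a b (fun k => z.1 k) n - l * z.1 n = z.2 n}
  add_mem' := by
    intro z w hz hw n
    have h1 := hz n
    have h2 := hw n
    simp only [Prod.fst_add, Prod.snd_add, lp.coeFn_add, Pi.add_apply]
    rw [← h1, ← h2]
    cases n <;> simp only [jacobiAct] <;> ring
  zero_mem' := by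
    intro n
    cases n <;> simp [jacobiAct]
  smul_mem' := by
    intro t z hz n
    have h1 := hz n
    simp only [Prod.smul_fst, Prod.smul_snd, lp.coeFn_smul, Pi.smul_apply, smul_eq_mul]
    rw [← h1]
    cases n <;> simp only [jacobiAct] <;> ring

lemma graphSub_closed (a b : ℕ → ℝ) (l : ℂ) :
    IsClosed (graphSub a b l : Set (lp (fun _ : ℕ => ℂ) 2 × lp (fun _ : ℕ => ℂ) 2)) := by
  have h : (graphSub a b l : Set (lp (fun _ : ℕ => ℂ) 2 × lp (fun _ : ℕ => ℂ) 2))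
      = ⋂ n, {z | jacobiAct a b (fun k => z.1 k) n - l * z.1 n = z.2 n} := by
    ext z
    rw [Set.mem_iInter]
    rfl
  rw [h]
  have h1 : ∀ n, Continuous fun z : lp (fun _ : ℕ => ℂ) 2 × lp (fun _ : ℕ => ℂ) 2 => z.1 n :=
    fun n => (lp_eval_continuous n).comp continuous_fst
  have h2 : ∀ n, Continuous fun z : lp (fun _ : ℕ => ℂ) 2 × lp (fun _ : ℕ => ℂ) 2 => z.2 n :=
    fun n => (lp_eval_continuous n).comp continuous_snd
  refine isClosed_iInter fun n => isClosed_eq (Continuous.sub ?_ ?_) (h2 n)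
  · cases n with
    | zero =>
      simp only [jacobiAct]
      exact (continuous_const.mul (h1 _)).add (continuous_const.mul (h1 _))
    | succ n =>
      simp only [jacobiAct]
      exact ((continuous_const.mul (h1 _)).add (continuous_const.mul (h1 _))).add
        (continuous_const.mul (h1 _))
  · exact continuous_const.mul (h1 n)

/-- A quantitative form of surjectivity, by the open mapping theorem on the closed graph. -/
lemma bounded_inverse (a b : ℕ → ℝ) (l : ℂ)
    (hl : l ∉ spectrumW (fun _ => 1) (jacobiAct a b)) :
    ∃ K > 0, ∀ y : ℕ → ℂ, (Summable fun n => ‖y n‖ ^ 2) →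
      ∃ v : ℕ → ℂ, (Summable fun n => ‖v n‖ ^ 2) ∧ (Summable fun n => ‖jacobiAct a b v n‖ ^ 2) ∧
        (∀ n, jacobiAct a b v n - l * v n = y n) ∧ ∑' n, ‖v n‖ ^ 2 ≤ K * ∑' n, ‖y n‖ ^ 2 := by
  simp only [spectrumW, Set.mem_ofPred_eq, not_not] at hl
  have : CompleteSpace (graphSub a b l) := (graphSub_closed a b l).completeSpace_coe
  set f : graphSub a b l →L[ℂ] lp (fun _ : ℕ => ℂ) 2 :=
    (ContinuousLinearMap.snd ℂ _ _).comp (graphSub a b l).subtypeL with hf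
  have hsurj : Function.Surjective f := by
    intro y
    obtain ⟨x, hx, hxe⟩ := hl.2 (fun n => y n) ((memL2_iff _).2 ((memℓp_two_iff _).1 y.2))
    exact ⟨⟨(⟨x, (memℓp_two_iff _).2 ((memL2_iff _).1 hx.1)⟩, y), fun n => congrFun hxe n⟩, rfl⟩
  obtain ⟨K, hK, hKy⟩ := f.exists_preimage_norm_le hsurj
  refine ⟨K ^ 2, by positivity, fun y hy => ?_⟩
  set y' : lp (fun _ : ℕ => ℂ) 2 := ⟨y, (memℓp_two_iff _).2 hy⟩ with hy'
  obtain ⟨z, hz, hzn⟩ := hKy y'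
  have hz2 : z.1.2 = y' := hz
  have hv := (memℓp_two_iff _).1 z.1.1.2
  have hve : ∀ n, jacobiAct a b (fun n => z.1.1 n) n - l * z.1.1 n = y n := by
    intro n
    have h1 : jacobiAct a b (fun n => z.1.1 n) n - l * z.1.1 n = z.1.2 n := z.2 n
    rw [h1, hz2]
  refine ⟨fun n => z.1.1 n, hv, ?_, hve, ?_⟩
  · refine Summable.of_nonneg_of_le (fun n => sq_nonneg _) (fun n => ?_)
        ((hy.mul_left 2).add (hv.mul_left (2 * ‖l‖ ^ 2)))
    have h0 : jacobiAct a b (fun n => z.1.1 n) n = y n + l * z.1.1 n := by rw [← hve n]; ring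
    have h1 : ‖y n + l * z.1.1 n‖ ≤ ‖y n‖ + ‖l‖ * ‖z.1.1 n‖ := (norm_add_le _ _).trans (by simp)
    have h2 : ‖y n + l * z.1.1 n‖ ^ 2 ≤ (‖y n‖ + ‖l‖ * ‖z.1.1 n‖) ^ 2 :=
      pow_le_pow_left₀ (norm_nonneg _) h1 2
    rw [h0]
    have h3 := sq_nonneg (‖y n‖ - ‖l‖ * ‖z.1.1 n‖)
    nlinarith
  · have h1 : ‖z.1.1‖ ≤ K * ‖y'‖ := (norm_fst_le z.1).trans hzn
    have h2 := pow_le_pow_left₀ (norm_nonneg _) h1 2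
    rw [mul_pow, lp_norm_sq, lp_norm_sq] at h2
    exact h2

/-! ### Windows on which `a` is almost constant -/

/-- Almost monotonicity: `aₙ ≥ (1 - ε) aₘ` for all large `m ≤ n`. -/
lemma almost_monotone (a : ℕ → ℝ) (ha : ∀ n, 0 < a n)
    (h3 : Summable fun n : ℕ => max (-(a (n + 1) / a n - 1)) 0) (ε : ℝ) (hε : 0 < ε)
    (hε1 : ε < 1) : ∃ N, ∀ m ≥ N, ∀ n ≥ m, (1 - ε) * a m ≤ a n := by
  set r : ℕ → ℝ := fun n => max (-(a (n + 1) / a n - 1)) 0 with hr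
  have hr0 : ∀ n, 0 ≤ r n := fun n => le_max_right _ _
  have hstep : ∀ n, (1 - r n) * a n ≤ a (n + 1) := by
    intro n
    have h : -(a (n + 1) / a n - 1) ≤ r n := le_max_left _ _
    have h' : 1 - r n ≤ a (n + 1) / a n := by linarith
    rwa [le_div_iff₀ (ha n)] at h'
  obtain ⟨N, hN⟩ := eventually_atTop.1 ((tendsto_sum_nat_add r).eventually (gt_mem_nhds hε))
  refine ⟨N, fun m hm n hn => ?_⟩
  have htail : ∀ j, ∑ i ∈ Finset.range j, r (i + m) < ε := fun j =>
    ((((summable_nat_add_iff m).2 h3).sum_le_tsum _ fun i _ => hr0 _)).trans_lt (hN m hm)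
  have hind : ∀ j, (1 - ∑ i ∈ Finset.range j, r (i + m)) * a m ≤ a (j + m) := by
    intro j
    induction j with
    | zero => simp
    | succ j ih =>
      have e1 := hstep (j + m)
      have e2 := htail (j + 1)
      have e3 := htail j
      rw [Finset.sum_range_succ] at e2 ⊢
      set s := ∑ i ∈ Finset.range j, r (i + m) with hs
      have hs0 : 0 ≤ s := Finset.sum_nonneg fun i _ => hr0 _
      have e4 := hr0 (j + m)
      rw [show j + 1 + m = j + m + 1 by omega]
      have e5 : (1 - r (j + m)) * ((1 - s) * a m) ≤ (1 - r (j + m)) * a (j + m) :=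
        mul_le_mul_of_nonneg_left ih (by linarith)
      have e6 : 0 ≤ r (j + m) * s * a m := mul_nonneg (mul_nonneg e4 hs0) (ha m).le
      nlinarith
  have e1 := hind (n - m)
  have e2 := htail (n - m)
  rw [Nat.sub_add_cancel hn] at e1
  refine le_trans ?_ e1
  exact mul_le_mul_of_nonneg_right (by linarith) (ha m).le

/-- There are arbitrarily far windows of length at least `R √aₘ` on which `a` is constant up to a
relative error `ε`. Otherwise `a` would grow by the factor `1 + ε` over each such window,
and the sums of `1 / a` over successive windows would be dominated by a geometric series. -/
lemma exists_window (a : ℕ → ℝ) (ha : ∀ n, 0 < a n) (h1 : Tendsto a atTop atTop)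
    (h2 : ¬ Summable fun n : ℕ => 1 / a n)
    (h3 : Summable fun n : ℕ => max (-(a (n + 1) / a n - 1)) 0)
    (ε : ℝ) (hε : 0 < ε) (hε1 : ε < 1) (R : ℝ) (hR : 0 < R) (n₀ : ℕ) :
    ∃ m ≥ n₀, ∃ L : ℕ, 1 ≤ L ∧ R * √(a m) ≤ L ∧
      ∀ n, m ≤ n → n ≤ m + 2 * L → (1 - ε) * a m ≤ a n ∧ a n ≤ (1 + ε) * a m := by
  by_contra hcon
  push Not at hcon
  obtain ⟨N₁, hN₁⟩ := almost_monotone a ha h3 ε hε hε1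
  obtain ⟨N₂, hN₂⟩ := eventually_atTop.1 (h1.eventually_ge_atTop 1)
  set N := max n₀ (max N₁ N₂) with hN
  -- a nearby later index at which `a` has grown by the factor `1 + ε`
  have hnext : ∀ m ≥ N, ∃ n, m < n ∧ ((n : ℝ) - m) ≤ (2 * R + 4) * √(a m) ∧
      (1 + ε) * a m < a n := by
    intro m hm
    have hm0 : n₀ ≤ m := by omega
    have hm1 : N₁ ≤ m := by omega
    have hm2 : N₂ ≤ m := by omega
    have hs1 : 1 ≤ √(a m) := by
      rw [Real.one_le_sqrt]; exact hN₂ m hm2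
    obtain ⟨n, hn1, hn2, hn3⟩ := hcon m hm0 (⌈R * √(a m)⌉₊ + 1) (by omega)
      (by push_cast; linarith [Nat.le_ceil (R * √(a m))])
    have hn4 := hn3 (hN₁ m hm1 n hn1)
    refine ⟨n, lt_of_le_of_ne hn1 ?_, ?_, hn4⟩
    · rintro rfl
      nlinarith [ha m]
    · have e1 := Nat.ceil_lt_add_one (by positivity : 0 ≤ R * √(a m))
      have e2 : (n : ℝ) ≤ (m + 2 * (⌈R * √(a m)⌉₊ + 1) : ℕ) := by exact_mod_cast hn2
      push_cast at e2
      nlinarith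
  set q := 1 / √(1 + ε) with hq
  have hq1 : q < 1 := by
    rw [hq, div_lt_one (by positivity)]
    rw [Real.lt_sqrt (by norm_num)]
    linarith
  set K := (2 * R + 4) / (1 - ε) / (1 - q) with hK
  have hK0 : 0 < K := by
    have : 0 < 1 - q := by linarith
    have : 0 < 1 - ε := by linarith
    positivity
  have hP : ∀ j : ℕ, ∃ m ≥ N + j, ∑ k ∈ Finset.Ico N m, 1 / a k ≤ K / √(a N) - K / √(a m) := by
    intro j
    induction j with
    | zero => exact ⟨N, le_rfl, by simp⟩
    | succ j ih =>
      obtain ⟨m, hm, hsum⟩ := ih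
      obtain ⟨n, hmn, hlen, han⟩ := hnext m (by omega)
      refine ⟨n, by omega, ?_⟩
      rw [← Finset.sum_Ico_consecutive _ (by omega : N ≤ m) hmn.le]
      have hsm : 0 < √(a m) := Real.sqrt_pos.2 (ha m)
      have e1 : ∑ k ∈ Finset.Ico m n, 1 / a k ≤ (n - m) * (1 / ((1 - ε) * a m)) := by
        have := Finset.sum_le_card_nsmul (Finset.Ico m n) (fun k => 1 / a k)
          (1 / ((1 - ε) * a m)) (fun k hk => by
            rw [Finset.mem_Ico] at hk
            refine one_div_le_one_div_of_le (mul_pos (by linarith) (ha m)) ?_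
            exact hN₁ m (by omega) k hk.1)
        rwa [Nat.card_Ico, nsmul_eq_mul, Nat.cast_sub hmn.le] at this
      have e2 : ((n : ℝ) - m) * (1 / ((1 - ε) * a m))
          ≤ (2 * R + 4) * √(a m) * (1 / ((1 - ε) * a m)) := by
        refine mul_le_mul_of_nonneg_right hlen ?_
        exact one_div_nonneg.2 (mul_pos (by linarith) (ha m)).le
      have e3 : (2 * R + 4) * √(a m) * (1 / ((1 - ε) * a m))
          = K * (1 - q) / √(a m) := by
        have f1 : 1 - q ≠ 0 := by linarith
        have f2 : 1 - ε ≠ 0 := by linarith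
        have f3 := (ha m).ne'
        rw [hK]
        field_simp
        rw [Real.sq_sqrt (ha m).le]
      have e4 : K / √(a n) ≤ K * q / √(a m) := by
        have : √(1 + ε) * √(a m) ≤ √(a n) := by
          rw [← Real.sqrt_mul (by linarith)]
          exact Real.sqrt_le_sqrt han.le
        calc K / √(a n) ≤ K / (√(1 + ε) * √(a m)) := by gcongr
          _ = _ := by rw [hq]; field_simp
      have e5 : K * (1 - q) / √(a m) = K / √(a m) - K * q / √(a m) := by ring
      linarith
  apply h2
  rw [← summable_nat_add_iff N]
  refine summable_of_sum_range_le (c := K / √(a N)) (fun n => (one_div_pos.2 (ha _)).le) fun j => ?_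
  obtain ⟨m, hm, hsum⟩ := hP j
  have e1 : ∑ i ∈ Finset.range j, 1 / a (i + N) = ∑ k ∈ Finset.Ico N (N + j), 1 / a k := by
    rw [Finset.sum_Ico_eq_sum_range, Nat.add_sub_cancel_left]
    exact Finset.sum_congr rfl fun i _ => by rw [add_comm]
  have e2 : ∑ k ∈ Finset.Ico N (N + j), 1 / a k ≤ ∑ k ∈ Finset.Ico N m, 1 / a k :=
    Finset.sum_le_sum_of_subset_of_nonneg (Finset.Ico_subset_Ico_right hm)
      fun k _ _ => (one_div_pos.2 (ha k)).le
  have e3 : 0 ≤ K / √(a m) := by positivity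
  rw [e1]
  linarith

/-! ### Approximate solutions of the dual equation -/

/-- A `C^{1,1}` cutoff supported in `[-1, 1]`. -/
def cutoff (x : ℝ) : ℝ := (max 0 (1 - x ^ 2)) ^ 2

lemma cutoff_nonneg (x : ℝ) : 0 ≤ cutoff x := sq_nonneg _

lemma cutoff_le_one (x : ℝ) : cutoff x ≤ 1 := by
  have h0 : 0 ≤ max 0 (1 - x ^ 2) := le_max_left _ _
  have h1 : max 0 (1 - x ^ 2) ≤ 1 := max_le (by norm_num) (by nlinarith [sq_nonneg x])
  unfold cutoff
  nlinarith

lemma cutoff_eq_zero {x : ℝ} (hx : 1 ≤ |x|) : cutoff x = 0 := by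
  have h : 1 ≤ x ^ 2 := by rw [← sq_abs]; nlinarith
  rw [cutoff, max_eq_left (by linarith)]
  norm_num

lemma half_le_cutoff {x : ℝ} (hx : |x| ≤ 1 / 2) : 1 / 2 ≤ cutoff x := by
  have h : x ^ 2 ≤ 1 / 4 := by rw [← sq_abs]; nlinarith [abs_nonneg x]
  have h' : 3 / 4 ≤ max 0 (1 - x ^ 2) := le_max_of_le_right (by linarith)
  unfold cutoff
  nlinarith

/-- First-order Taylor bound for `t ↦ (t⁺)²`. -/
lemma sq_posPart_taylor (s t : ℝ) :
    |(max 0 t) ^ 2 - (max 0 s) ^ 2 - 2 * max 0 s * (t - s)| ≤ (t - s) ^ 2 := by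
  rw [abs_le]
  rcases le_total 0 s with hs | hs <;> rcases le_total 0 t with ht | ht <;>
    simp only [max_eq_left, max_eq_right, hs, ht] <;> constructor <;> nlinarith

lemma cutoff_lipschitz (x h : ℝ) (hh : |h| ≤ 1) : |cutoff (x + h) - cutoff x| ≤ 54 * |h| := by
  by_cases hx : 2 ≤ |x|
  · have h1 : 1 ≤ |x + h| := by
      have := abs_sub_abs_le_abs_sub x (-h)
      rw [abs_neg, sub_neg_eq_add] at this
      linarith
    rw [cutoff_eq_zero h1, cutoff_eq_zero (by linarith)]
    simp
  · push Not at hx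
    have h1 := sq_posPart_taylor (1 - x ^ 2) (1 - (x + h) ^ 2)
    have e : (1 - (x + h) ^ 2) - (1 - x ^ 2) = -(h * (2 * x + h)) := by ring
    rw [e] at h1
    have h2 : |h * (2 * x + h)| ≤ 5 * |h| := by
      rw [abs_mul, mul_comm]
      refine mul_le_mul_of_nonneg_right ?_ (abs_nonneg h)
      refine (abs_add_le _ _).trans ?_
      rw [abs_mul, abs_two]
      linarith
    have h3 : 0 ≤ max 0 (1 - x ^ 2) := le_max_left _ _
    have h4 : max 0 (1 - x ^ 2) ≤ 1 := max_le (by norm_num) (by nlinarith [sq_nonneg x])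
    set z := h * (2 * x + h) with hz
    set g := max 0 (1 - x ^ 2) with hg
    have h5 : cutoff (x + h) - cutoff x
        = ((max 0 (1 - (x + h) ^ 2)) ^ 2 - g ^ 2 - 2 * g * (-z)) + 2 * g * (-z) := by
      simp only [cutoff, hg]; ring
    have h6 : |2 * g * (-z)| ≤ 2 * (5 * |h|) := by
      rw [abs_mul, abs_neg, abs_of_nonneg (by positivity : 0 ≤ 2 * g)]
      gcongr
      linarith
    have h7 : (-z) ^ 2 ≤ 25 * |h| := by
      have : (-z) ^ 2 = |z| ^ 2 := by rw [sq_abs]; ring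
      rw [this]
      have h0 := abs_nonneg h
      have hz0 := abs_nonneg z
      nlinarith
    rw [h5]
    refine (abs_add_le _ _).trans ?_
    have := abs_nonneg h
    linarith

lemma cutoff_second (x h : ℝ) (hh : |h| ≤ 1) :
    |cutoff (x - h) - 2 * cutoff x + cutoff (x + h)| ≤ 54 * h ^ 2 := by
  by_cases hx : 2 ≤ |x|
  · have h1 : 1 ≤ |x + h| := by
      have := abs_sub_abs_le_abs_sub x (-h)
      rw [abs_neg, sub_neg_eq_add] at this
      linarith
    have h2 : 1 ≤ |x - h| := by
      have := abs_sub_abs_le_abs_sub x h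
      linarith
    rw [cutoff_eq_zero h1, cutoff_eq_zero h2, cutoff_eq_zero (by linarith)]
    simp only [mul_zero, sub_zero, add_zero, abs_zero]
    positivity
  · push Not at hx
    have h1 := sq_posPart_taylor (1 - x ^ 2) (1 - (x + h) ^ 2)
    have h2 := sq_posPart_taylor (1 - x ^ 2) (1 - (x - h) ^ 2)
    have h3 : 0 ≤ max 0 (1 - x ^ 2) := le_max_left _ _
    have h4 : max 0 (1 - x ^ 2) ≤ 1 := max_le (by norm_num) (by nlinarith [sq_nonneg x])
    set g := max 0 (1 - x ^ 2) with hg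
    have h5 : cutoff (x - h) - 2 * cutoff x + cutoff (x + h)
        = ((max 0 (1 - (x + h) ^ 2)) ^ 2 - g ^ 2 - 2 * g * ((1 - (x + h) ^ 2) - (1 - x ^ 2)))
          + ((max 0 (1 - (x - h) ^ 2)) ^ 2 - g ^ 2 - 2 * g * ((1 - (x - h) ^ 2) - (1 - x ^ 2)))
          - 4 * g * h ^ 2 := by
      simp only [cutoff, hg]; ring
    have e1 : ((1 - (x + h) ^ 2) - (1 - x ^ 2)) ^ 2 = (2 * x + h) ^ 2 * h ^ 2 := by ring
    have e2 : ((1 - (x - h) ^ 2) - (1 - x ^ 2)) ^ 2 = (2 * x - h) ^ 2 * h ^ 2 := by ring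
    have hxb := abs_le.1 hx.le
    have hhb := abs_le.1 hh
    have e3 : (2 * x + h) ^ 2 ≤ 25 := by nlinarith
    have e4 : (2 * x - h) ^ 2 ≤ 25 := by nlinarith
    have e5 := mul_le_mul_of_nonneg_right e3 (sq_nonneg h)
    have e6 := mul_le_mul_of_nonneg_right e4 (sq_nonneg h)
    have e7 : g * h ^ 2 ≤ 1 * h ^ 2 := mul_le_mul_of_nonneg_right h4 (sq_nonneg h)
    have e8 : 0 ≤ g * h ^ 2 := by positivity
    rw [abs_le] at h1 h2
    rw [h5, abs_le]
    constructor <;> linarith [h1.1, h1.2, h2.1, h2.2]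

/-- Pointwise error of the modulated wave of multiplier `z = c + iσ`, where `2 - 2c = δ / A`: the
three terms come from the variation of `a` and from the second and first differences of the cutoff. -/
lemma wave_error (α A δ c σ f g k : ℝ) (hα : 0 < α)
    (hc : 2 - 2 * c = δ / A) (hc1 : |c| ≤ 1) (hσ : 0 ≤ σ) (hδ : 0 < δ) (hg : 0 ≤ g) :
    ‖(α : ℂ) * (2 * (g : ℂ) - star (⟨c, σ⟩ : ℂ) * f - (⟨c, σ⟩ : ℂ) * k) - δ * g‖
      ≤ δ * |α / A - 1| * g + α * |f - 2 * g + k| + α * σ * |k - f| := by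
  have e : (α : ℂ) * (2 * (g : ℂ) - star (⟨c, σ⟩ : ℂ) * f - (⟨c, σ⟩ : ℂ) * k) - δ * g
      = ((δ * (α / A - 1) * g : ℝ) : ℂ) + ((-(α * c * (f - 2 * g + k)) : ℝ) : ℂ)
        + ((-(α * σ * (k - f)) : ℝ) : ℂ) * Complex.I := by
    have hcd : δ * (α / A - 1) * g = (α * (2 - 2 * c) - δ) * g := by rw [hc]; ring
    rw [hcd]
    apply Complex.ext <;> simp <;> ring
  rw [e]
  refine (norm_add_le _ _).trans (add_le_add ((norm_add_le _ _).trans (add_le_add ?_ ?_)) ?_)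
  · rw [Complex.norm_real, Real.norm_eq_abs, abs_mul, abs_mul, abs_of_pos hδ, abs_of_nonneg hg]
  · rw [Complex.norm_real, Real.norm_eq_abs, abs_neg, abs_mul, abs_mul, abs_of_pos hα]
    refine mul_le_mul_of_nonneg_right ?_ (abs_nonneg _)
    nlinarith
  · rw [norm_mul, Complex.norm_I, mul_one, Complex.norm_real, Real.norm_eq_abs, abs_neg, abs_mul,
      abs_mul, abs_of_pos hα, abs_of_nonneg hσ]

lemma wave_lower (A δ c σ f g : ℝ) (hδ : 0 < δ)
    (hc : 2 - 2 * c = δ / A) (hcσ : c ^ 2 + σ ^ 2 = 1) (hg : 0 ≤ g) :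
    √δ / √A * g - |g - f| ≤ ‖(f : ℂ) - (⟨c, σ⟩ : ℂ) * g‖ := by
  have e : (f : ℂ) - (⟨c, σ⟩ : ℂ) * g = (1 - (⟨c, σ⟩ : ℂ)) * g - ((g - f : ℝ) : ℂ) := by
    push_cast; ring
  have h1 : ‖(1 - (⟨c, σ⟩ : ℂ))‖ = √δ / √A := by
    rw [← Real.sqrt_div hδ.le, ← hc, Complex.norm_def]
    congr 1
    simp [Complex.normSq_apply]
    linarith
  rw [e]
  refine le_trans (le_of_eq ?_) (norm_sub_norm_le _ _)
  rw [norm_mul, h1, Complex.norm_real, Complex.norm_real, Real.norm_eq_abs, Real.norm_eq_abs,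
    abs_of_nonneg hg]

set_option maxHeartbeats 1600000 in
/-- Approximate solutions of the dual equation `a D D* w = δ w` in the weighted norm `∑ |·|² / a`:
a plane wave of the local frequency, cut off smoothly to a window on which `a` is almost
constant. -/
lemma exists_trial (a : ℕ → ℝ) (ha : ∀ n, 0 < a n) (h1 : Tendsto a atTop atTop)
    (h2 : ¬ Summable fun n : ℕ => 1 / a n)
    (h3 : Summable fun n : ℕ => max (-(a (n + 1) / a n - 1)) 0)
    (δ : ℝ) (hδ : 0 < δ) (η : ℝ) (hη : 0 < η) (n₀ : ℕ) :
    ∃ (w : ℕ → ℂ) (N : ℕ), (∀ n < n₀, coedge w n = 0) ∧ (∀ n ≥ N, w n = 0) ∧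
      0 < ∑ n ∈ Finset.range (N + 1), ‖coedge w n‖ ^ 2 ∧
      ∑ n ∈ Finset.range (N + 1), ‖(a n : ℂ) * edge (coedge w) n - δ * w n‖ ^ 2 / a n ≤
        η * ∑ n ∈ Finset.range (N + 1), ‖coedge w n‖ ^ 2 := by
  -- `κ` bounds the pointwise error; `R` and `ε` are chosen to make it that small
  set κ := √(η * δ / 192) with hκ
  have hκ0 : 0 < κ := Real.sqrt_pos.2 (by positivity)
  have hκ2 : κ ^ 2 = η * δ / 192 := Real.sq_sqrt (by positivity)
  have hsδ : 0 < √δ := Real.sqrt_pos.2 hδ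
  set R := 1 + 216 / √δ + (216 + 432 * √δ) / κ with hR
  have hR1 : 1 ≤ R := by
    have : 0 ≤ 216 / √δ := by positivity
    have : 0 ≤ (216 + 432 * √δ) / κ := by positivity
    linarith
  have hR0 : 0 < R := by linarith
  have hRδ : 54 / R ≤ √δ / 4 := by
    have e1 : 216 / √δ ≤ R := by
      have : 0 ≤ (216 + 432 * √δ) / κ := by positivity
      linarith
    rw [div_le_iff₀ hsδ] at e1
    rw [div_le_iff₀ hR0]
    linarith
  have hRκ : (108 + 216 * √δ) / R ≤ κ / 2 := by
    have e1 : (216 + 432 * √δ) / κ ≤ R := by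
      have : 0 ≤ 216 / √δ := by positivity
      linarith
    rw [div_le_iff₀ hκ0] at e1
    rw [div_le_iff₀ hR0]
    linarith
  set ε := min (1 / 2) (κ / (2 * δ)) with hε
  have hε0 : 0 < ε := by positivity
  have hε2 : ε ≤ 1 / 2 := min_le_left _ _
  have hεκ : δ * ε ≤ κ / 2 := by
    have : ε ≤ κ / (2 * δ) := min_le_right _ _
    rw [le_div_iff₀ (by positivity)] at this
    linarith
  clear_value κ R ε
  obtain ⟨N₂, hN₂⟩ := eventually_atTop.1 (h1.eventually_ge_atTop δ)
  obtain ⟨m, hm, L, hL1, hLR, hwin⟩ := exists_window a ha h1 h2 h3 ε hε0 (by linarith) R hR0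
    (max (n₀ + 1) N₂)
  have hm0 : n₀ + 1 ≤ m := by omega
  have hAδ : δ ≤ a m := hN₂ m (by omega)
  set A := a m with hA
  have hA0 : 0 < A := ha m
  have hsA : 0 < √A := Real.sqrt_pos.2 hA0
  have hLpos : (0 : ℝ) < L := by exact_mod_cast hL1
  set c := 1 - δ / (2 * A) with hc
  have hδA : δ / A ≤ 1 := (div_le_one hA0).2 hAδ
  have hδA0 : 0 < δ / A := by positivity
  have hc2 : 2 - 2 * c = δ / A := by rw [hc]; field_simp; ring
  have hc0 : 0 ≤ c := by linarith
  have hc1 : c ≤ 1 := by linarith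
  set σ := √(1 - c ^ 2) with hσ
  have hσ2 : σ ^ 2 = 1 - c ^ 2 := Real.sq_sqrt (by nlinarith)
  have hσ0 : 0 ≤ σ := Real.sqrt_nonneg _
  have hσδ : σ ≤ √δ / √A := by
    rw [← Real.sqrt_div hδ.le]
    refine Real.sqrt_le_sqrt ?_
    rw [← hc2]; nlinarith
  clear_value c σ A
  set z : ℂ := ⟨c, σ⟩ with hz
  have hzz : z * star z = 1 := by
    rw [RCLike.star_def, Complex.mul_conj, Complex.normSq_mk]
    have : c * c + σ * σ = 1 := by nlinarith
    rw [this]; simp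
  have hznorm : ‖z‖ = 1 := by
    rw [Complex.norm_def, Complex.normSq_mk]
    have : c * c + σ * σ = 1 := by nlinarith
    rw [this]; simp
  -- the cutoff, centred at `m + L`, of half-width `L`
  set φ : ℕ → ℝ := fun n => cutoff (((n : ℝ) - m - L) / L) with hφ
  have hφ0 : ∀ n, 0 ≤ φ n := fun n => cutoff_nonneg _
  have hφ1 : ∀ n, φ n ≤ 1 := fun n => cutoff_le_one _
  have hφl : ∀ n, n ≤ m → φ n = 0 := by
    intro n hn
    refine cutoff_eq_zero ?_
    have : (n : ℝ) ≤ m := by exact_mod_cast hn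
    rw [abs_of_nonpos (div_nonpos_of_nonpos_of_nonneg (by linarith) hLpos.le), ← neg_div,
      le_div_iff₀ hLpos]
    linarith
  have hφr : ∀ n, m + 2 * L ≤ n → φ n = 0 := by
    intro n hn
    refine cutoff_eq_zero ?_
    have : (m : ℝ) + 2 * L ≤ n := by exact_mod_cast hn
    rw [abs_of_nonneg (div_nonneg (by linarith) hLpos.le), le_div_iff₀ hLpos]
    linarith
  have hh1 : |(1 / L : ℝ)| ≤ 1 := by
    rw [abs_of_pos (by positivity), div_le_one hLpos]; exact_mod_cast hL1
  have hhR : (1 / L : ℝ) ≤ 1 / (R * √A) := one_div_le_one_div_of_le (by positivity) hLR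
  have hshift : ∀ n : ℕ, (((n + 1 : ℕ) : ℝ) - m - L) / L = ((n : ℝ) - m - L) / L + 1 / L := by
    intro n; push_cast; ring
  have hd1 : ∀ n, |φ (n + 1) - φ n| ≤ 54 * (1 / (R * √A)) := by
    intro n
    simp only [hφ, hshift]
    refine (cutoff_lipschitz _ _ hh1).trans ?_
    rw [abs_of_pos (by positivity)]
    linarith
  have hd2 : ∀ n, |φ n - 2 * φ (n + 1) + φ (n + 2)| ≤ 54 * (1 / (R * √A)) ^ 2 := by
    intro n
    have h := cutoff_second ((((n + 1 : ℕ) : ℝ) - m - L) / L) (1 / L) hh1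
    rw [← hshift (n + 1), hshift n, add_sub_cancel_right, ← hshift n] at h
    refine h.trans ?_
    exact mul_le_mul_of_nonneg_left (pow_le_pow_left₀ (by positivity) hhR 2) (by norm_num)
  set w : ℕ → ℂ := fun n => (-z) ^ n * (φ n : ℂ) with hw
  have hw0 : ∀ n, n ≤ m → w n = 0 := fun n hn => by simp [hw, hφl n hn]
  have hwr : ∀ n, m + 2 * L ≤ n → w n = 0 := fun n hn => by simp [hw, hφr n hn]
  have hpow : ∀ n, ‖(-z) ^ n‖ = 1 := fun n => by rw [norm_pow, norm_neg, hznorm, one_pow]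
  -- pointwise bound on the error
  have herr : ∀ n, m ≤ n → n ≤ m + 2 * L →
      ‖(a n : ℂ) * edge (coedge w) n - δ * w n‖ ≤ κ := by
    intro n hn1 hn2
    obtain ⟨k, rfl⟩ : ∃ k, n = k + 1 := ⟨n - 1, by omega⟩
    obtain ⟨hw1, hw2⟩ := hwin (k + 1) hn1 hn2
    have e1 : (a (k + 1) : ℂ) * edge (coedge w) (k + 1) - δ * w (k + 1)
        = (-z) ^ (k + 1) * ((a (k + 1) : ℂ) * (2 * (φ (k + 1) : ℂ) - star z * (φ k : ℂ)
          - z * (φ (k + 2) : ℂ)) - δ * (φ (k + 1) : ℂ)) := by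
      have f1 : (-z) ^ k = (-z) ^ (k + 1) * (-star z) := by
        rw [pow_succ, mul_assoc, neg_mul_neg, hzz, mul_one]
      simp only [edge, coedge, hw]
      rw [f1, pow_succ (-z) (k + 1)]
      ring
    rw [e1, norm_mul, hpow, one_mul]
    refine (wave_error (a (k + 1)) A δ c σ (φ k) (φ (k + 1)) (φ (k + 2)) (ha _) hc2
      (by rw [abs_of_nonneg hc0]; exact hc1) hσ0 hδ (hφ0 _)).trans ?_
    have t1 : δ * |a (k + 1) / A - 1| * φ (k + 1) ≤ κ / 2 := by
      have g1 : |a (k + 1) / A - 1| ≤ ε := by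
        rw [abs_le]
        constructor
        · have : 1 - ε ≤ a (k + 1) / A := by rwa [le_div_iff₀ hA0]
          linarith
        · have : a (k + 1) / A ≤ 1 + ε := by rwa [div_le_iff₀ hA0]
          linarith
      calc δ * |a (k + 1) / A - 1| * φ (k + 1) ≤ δ * ε * 1 := by
            gcongr
            · exact hφ0 _
            · exact hφ1 _
        _ ≤ _ := by linarith
    have ha2 : a (k + 1) ≤ 2 * A := by nlinarith
    have t2 : a (k + 1) * |φ k - 2 * φ (k + 1) + φ (k + 2)| ≤ 108 / R := by
      calc a (k + 1) * |φ k - 2 * φ (k + 1) + φ (k + 2)|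
          ≤ 2 * A * (54 * (1 / (R * √A)) ^ 2) := by
            gcongr
            exact hd2 k
        _ = 108 / R * (1 / R) := by
            field_simp
            rw [Real.sq_sqrt hA0.le]
            ring
        _ ≤ 108 / R * 1 := by
            refine mul_le_mul_of_nonneg_left ?_ (by positivity)
            rw [div_le_one hR0]; exact hR1
        _ = _ := mul_one _
    have t3 : a (k + 1) * σ * |φ (k + 2) - φ k| ≤ 216 * √δ / R := by
      have g1 : |φ (k + 2) - φ k| ≤ 108 * (1 / (R * √A)) := by
        have e : φ (k + 2) - φ k = (φ (k + 1 + 1) - φ (k + 1)) + (φ (k + 1) - φ k) := by ring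
        rw [e]
        refine (abs_add_le _ _).trans ?_
        linarith [hd1 (k + 1), hd1 k]
      calc a (k + 1) * σ * |φ (k + 2) - φ k|
          ≤ 2 * A * (√δ / √A) * (108 * (1 / (R * √A))) := by
            gcongr
        _ = _ := by
            field_simp
            rw [Real.sq_sqrt hA0.le]
            ring
    have t4 : (108 + 216 * √δ) / R = 108 / R + 216 * √δ / R := by ring
    linarith
  set N := m + 2 * L + 1 with hN
  have hinside : ∀ n, n ∉ Finset.Icc m (m + 2 * L) →
      ‖(a n : ℂ) * edge (coedge w) n - δ * w n‖ ^ 2 / a n = 0 := by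
    intro n hn
    rw [Finset.mem_Icc] at hn
    have hz3 : edge (coedge w) n = 0 ∧ w n = 0 := by
      rcases lt_or_ge n m with hlt | hge
      · refine ⟨?_, hw0 n hlt.le⟩
        cases n with
        | zero => simp [edge, coedge, hw0 0 (by omega), hw0 1 (by omega)]
        | succ n =>
          simp [edge, coedge, hw0 n (by omega), hw0 (n + 1) (by omega), hw0 (n + 1 + 1) (by omega)]
      · have hgt : m + 2 * L < n := by omega
        refine ⟨?_, hwr n hgt.le⟩
        obtain ⟨k, rfl⟩ : ∃ k, n = k + 1 := ⟨n - 1, by omega⟩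
        simp [edge, coedge, hwr k (by omega), hwr (k + 1) (by omega), hwr (k + 1 + 1) (by omega)]
    rw [hz3.1, hz3.2]
    simp
  have hE : ∑ n ∈ Finset.range (N + 1), ‖(a n : ℂ) * edge (coedge w) n - δ * w n‖ ^ 2 / a n
      ≤ 6 * L * κ ^ 2 / A := by
    have e1 : ∑ n ∈ Finset.range (N + 1), ‖(a n : ℂ) * edge (coedge w) n - δ * w n‖ ^ 2 / a n
        = ∑ n ∈ Finset.Icc m (m + 2 * L),
          ‖(a n : ℂ) * edge (coedge w) n - δ * w n‖ ^ 2 / a n := by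
      symm
      refine Finset.sum_subset ?_ fun n _ hn => hinside n hn
      intro n hn
      rw [Finset.mem_Icc] at hn
      rw [Finset.mem_range]
      omega
    rw [e1]
    have e2 := Finset.sum_le_card_nsmul (Finset.Icc m (m + 2 * L))
      (fun n => ‖(a n : ℂ) * edge (coedge w) n - δ * w n‖ ^ 2 / a n) (κ ^ 2 / (A / 2))
      (fun n hn => by
        rw [Finset.mem_Icc] at hn
        have f1 := herr n hn.1 hn.2
        have f2 : A / 2 ≤ a n := by
          have := (hwin n hn.1 hn.2).1
          nlinarith
        have f3 := pow_le_pow_left₀ (norm_nonneg _) f1 2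
        exact div_le_div₀ (by positivity) f3 (by positivity) f2)
    refine e2.trans ?_
    rw [Nat.card_Icc, nsmul_eq_mul]
    have e3 : ((m + 2 * L + 1 - m : ℕ) : ℝ) ≤ 3 * L := by
      have : m + 2 * L + 1 - m ≤ 3 * L := by omega
      exact_mod_cast this
    calc ((m + 2 * L + 1 - m : ℕ) : ℝ) * (κ ^ 2 / (A / 2)) ≤ 3 * L * (κ ^ 2 / (A / 2)) := by gcongr
      _ = _ := by field_simp; ring
  have hU : L * δ / (32 * A) ≤ ∑ n ∈ Finset.range (N + 1), ‖coedge w n‖ ^ 2 := by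
    have hsub : Finset.Icc (m + L) (m + L + L / 2) ⊆ Finset.range (N + 1) := by
      intro n hn
      rw [Finset.mem_Icc] at hn
      rw [Finset.mem_range]
      omega
    refine le_trans ?_ (Finset.sum_le_sum_of_subset_of_nonneg hsub fun n _ _ => sq_nonneg _)
    have e2 := Finset.card_nsmul_le_sum (Finset.Icc (m + L) (m + L + L / 2))
      (fun n => ‖coedge w n‖ ^ 2) (δ / (16 * A)) (fun n hn => by
        rw [Finset.mem_Icc] at hn
        obtain ⟨k, rfl⟩ : ∃ k, n = k + 1 := ⟨n - 1, by omega⟩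
        have f1 : coedge w (k + 1) = (-z) ^ k * ((φ k : ℂ) - z * (φ (k + 1) : ℂ)) := by
          simp only [coedge, hw, pow_succ]; ring
        have f2 : 1 / 2 ≤ φ (k + 1) := by
          refine half_le_cutoff ?_
          have g1 : ((m + L : ℕ) : ℝ) ≤ ((k + 1 : ℕ) : ℝ) := by exact_mod_cast hn.1
          have g2 : 2 * (k + 1) ≤ 2 * m + 3 * L := by omega
          have g3 : 2 * ((k + 1 : ℕ) : ℝ) ≤ 2 * m + 3 * L := by exact_mod_cast g2
          push_cast at g1
          rw [abs_of_nonneg (div_nonneg (by push_cast; linarith) hLpos.le), div_le_iff₀ hLpos]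
          linarith
        have f3 := wave_lower A δ c σ (φ k) (φ (k + 1)) hδ hc2 (by linarith) (hφ0 _)
        have f4 := hd1 k
        have f5 : 54 * (1 / (R * √A)) ≤ √δ / √A / 4 := by
          calc 54 * (1 / (R * √A)) = 54 / R / √A := by field_simp
            _ ≤ √δ / 4 / √A := by gcongr
            _ = _ := by ring
        have f6 : √δ / √A * (1 / 2) ≤ √δ / √A * φ (k + 1) :=
          mul_le_mul_of_nonneg_left f2 (by positivity)
        have f7 : √δ / √A / 4 ≤ ‖coedge w (k + 1)‖ := by
          rw [f1, norm_mul, hpow, one_mul]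
          linarith
        have f8 := pow_le_pow_left₀ (by positivity) f7 2
        refine le_trans (le_of_eq ?_) f8
        rw [div_pow, div_pow, Real.sq_sqrt hδ.le, Real.sq_sqrt hA0.le]
        field_simp
        norm_num)
    refine le_trans ?_ e2
    rw [Nat.card_Icc, nsmul_eq_mul]
    have e3 : (L : ℝ) / 2 ≤ ((m + L + L / 2 + 1 - (m + L) : ℕ) : ℝ) := by
      have : L ≤ 2 * (m + L + L / 2 + 1 - (m + L)) := by omega
      have h' : (L : ℝ) ≤ 2 * ((m + L + L / 2 + 1 - (m + L) : ℕ) : ℝ) := by exact_mod_cast this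
      linarith
    calc (L : ℝ) * δ / (32 * A) = L / 2 * (δ / (16 * A)) := by field_simp; norm_num
      _ ≤ _ := by gcongr
  refine ⟨w, N, fun n hn => ?_, fun n hn => hwr n (by omega), lt_of_lt_of_le (by positivity) hU, ?_⟩
  · cases n with
    | zero => simp [coedge, hw0 0 (by omega)]
    | succ n => simp [coedge, hw0 n (by omega), hw0 (n + 1) (by omega)]
  · refine hE.trans (le_trans (le_of_eq ?_) (mul_le_mul_of_nonneg_left hU hη.le))
    rw [hκ2]
    field_simp
    norm_num

/-! ### The spectrum above `-M` -/

/-- Every point above `-M` is in the spectrum. -/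
lemma mem_spectrum (a b : ℕ → ℝ) (ha : ∀ n, 0 < a n) (M : ℝ)
    (h1 : Tendsto a atTop atTop) (h2 : ¬ Summable fun n : ℕ => 1 / a n)
    (h3 : Summable fun n : ℕ => max (-(a (n + 1) / a n - 1)) 0)
    (hpot : Tendsto (pot a b) atTop (𝓝 (-M))) (l : ℝ) (hl : -M < l) :
    (l : ℂ) ∈ spectrumW (fun _ => 1) (jacobiAct a b) := by
  by_contra hmem
  obtain ⟨K, hK, hinv⟩ := bounded_inverse a b l hmem
  obtain ⟨B, hB0, hB⟩ := pot_bounded a b M hpot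
  set δ := l + M with hδ
  have hδ0 : 0 < δ := by linarith
  set K₂ := (1 + K) / 2 + (|l| + B) * K with hK₂
  have hK₂0 : 0 < K₂ := by positivity
  set ε := 1 / (2 * (1 + K)) with hε
  have hε0 : 0 < ε := by positivity
  obtain ⟨n₀, hn₀⟩ := Metric.tendsto_atTop.1 hpot ε hε0
  obtain ⟨w, N, hw1, hw2, hU0, hE⟩ :=
    exists_trial a ha h1 h2 h3 δ hδ0 (1 / (4 * K₂)) (by positivity) n₀
  set u := coedge w with hu
  set U := ∑ n ∈ Finset.range (N + 1), ‖u n‖ ^ 2 with hU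
  have hu0 : ∀ n ≥ N + 1, u n = 0 := by
    intro n hn
    obtain ⟨k, rfl⟩ : ∃ k, n = k + 1 := ⟨n - 1, by omega⟩
    simp [hu, coedge, hw2 k (by omega), hw2 (k + 1) (by omega)]
  have hus : HasSum (fun n => ‖star (u n)‖ ^ 2) U := by
    simp only [norm_star]
    exact hasSum_sum_of_ne_finset_zero fun n hn => by
      rw [hu0 n (by simpa using hn)]; simp
  obtain ⟨v, hv, hCv, hve, hvK⟩ := hinv (fun n => star (u n)) hus.summable
  rw [hus.tsum_eq] at hvK
  set V := ∑' n, ‖v n‖ ^ 2 with hV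
  have hVfin : ∑ n ∈ Finset.range (N + 1), ‖v n‖ ^ 2 ≤ V :=
    hv.sum_le_tsum _ fun n _ => sq_nonneg _
  -- energy bound for `v`
  have hen : ∑ n ∈ Finset.range (N + 1), a n * ‖edge v n‖ ^ 2 ≤ K₂ * U := by
    obtain ⟨hs, he⟩ := energy_le a b ha h2 B hB v hv hCv
    refine (he (N + 1)).trans ?_
    have hpt : ∀ n, (jacobiAct a b v n * star (v n)).re - pot a b n * ‖v n‖ ^ 2
        ≤ 1 / 2 * (‖star (u n)‖ ^ 2 + ‖v n‖ ^ 2) + (|l| + B) * ‖v n‖ ^ 2 := by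
      intro n
      have e0 : jacobiAct a b v n = star (u n) + (l : ℂ) * v n := by rw [← hve n]; ring
      have e1 : (jacobiAct a b v n * star (v n)).re
          = (star (u n) * star (v n)).re + l * ‖v n‖ ^ 2 := by
        rw [e0, add_mul, mul_assoc, Complex.add_re, Complex.re_ofReal_mul]
        congr 2
        rw [RCLike.star_def, Complex.mul_conj']
        norm_cast
      have e2 : (star (u n) * star (v n)).re ≤ ‖star (u n)‖ * ‖v n‖ :=
        (Complex.re_le_norm _).trans (by simp)
      have e3 : l * ‖v n‖ ^ 2 ≤ |l| * ‖v n‖ ^ 2 :=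
        mul_le_mul_of_nonneg_right (le_abs_self l) (sq_nonneg _)
      have e4 : -pot a b n * ‖v n‖ ^ 2 ≤ B * ‖v n‖ ^ 2 :=
        mul_le_mul_of_nonneg_right ((neg_le_abs _).trans (hB n)) (sq_nonneg _)
      rw [e1]
      nlinarith [sq_nonneg (‖star (u n)‖ - ‖v n‖)]
    have := hasSum_le hpt hs.hasSum
      (((hus.add hv.hasSum).mul_left (1 / 2)).add (hv.hasSum.mul_left (|l| + B)))
    refine this.trans ?_
    rw [← hV]
    have e5 : (|l| + B) * V ≤ (|l| + B) * (K * U) :=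
      mul_le_mul_of_nonneg_left hvK (by positivity)
    rw [hK₂]
    nlinarith
  -- pair the equation for `v` with `u`
  have hpair : (U : ℂ) = ∑ n ∈ Finset.range (N + 1),
      (((a n : ℂ) * edge u n - δ * w n) * edge v n + ((pot a b n + M : ℝ) : ℂ) * v n * u n) := by
    have e1 : (U : ℂ) = ∑ n ∈ Finset.range (N + 1), (jacobiAct a b v n - l * v n) * u n := by
      rw [hU]
      push_cast
      refine Finset.sum_congr rfl fun n _ => ?_
      rw [hve n, RCLike.star_def, Complex.conj_mul']
    have e2 := sum_jacobiAct_mul a b v u N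
    rw [hu0 (N + 1) le_rfl, mul_zero, sub_zero] at e2
    have e3 := sum_coedge_mul w v N
    rw [hw2 N le_rfl, zero_mul, sub_zero] at e3
    have e4 : ∑ n ∈ Finset.range (N + 1), (jacobiAct a b v n - l * v n) * u n
        = ∑ n ∈ Finset.range (N + 1), jacobiAct a b v n * u n
          + (M : ℂ) * ∑ n ∈ Finset.range (N + 1), v n * u n
          - (δ : ℂ) * ∑ n ∈ Finset.range (N + 1), u n * v n := by
      rw [Finset.mul_sum, Finset.mul_sum, ← Finset.sum_add_distrib, ← Finset.sum_sub_distrib]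
      refine Finset.sum_congr rfl fun n _ => ?_
      rw [hδ]; push_cast; ring
    rw [e1, e4, e2, e3, Finset.mul_sum, Finset.mul_sum, ← Finset.sum_add_distrib,
      ← Finset.sum_sub_distrib]
    refine Finset.sum_congr rfl fun n _ => ?_
    push_cast; ring
  have hbound : U ≤ ∑ n ∈ Finset.range (N + 1),
      (K₂ * (‖(a n : ℂ) * edge u n - δ * w n‖ ^ 2 / a n)
        + 1 / (4 * K₂) * (a n * ‖edge v n‖ ^ 2) + ε / 2 * (‖v n‖ ^ 2 + ‖u n‖ ^ 2)) := by
    have e1 : U = ‖(U : ℂ)‖ := by rw [Complex.norm_real, Real.norm_eq_abs, abs_of_pos hU0]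
    rw [e1, hpair]
    refine (norm_sum_le _ _).trans (Finset.sum_le_sum fun n _ => ?_)
    refine (norm_add_le _ _).trans (add_le_add ?_ ?_)
    · rw [norm_mul]
      set E := ‖(a n : ℂ) * edge u n - δ * w n‖
      set G := ‖edge v n‖
      have han := ha n
      have f1 : K₂ * (E ^ 2 / a n) + 1 / (4 * K₂) * (a n * G ^ 2) - E * G
          = (2 * K₂ * E - a n * G) ^ 2 / (4 * K₂ * a n) := by
        field_simp
        ring
      have f2 : 0 ≤ (2 * K₂ * E - a n * G) ^ 2 / (4 * K₂ * a n) := by positivity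
      linarith
    · by_cases hn : n < n₀
      · rw [hw1 n hn, mul_zero, norm_zero]
        positivity
      · have f1 := hn₀ n (by omega)
        rw [Real.dist_eq, sub_neg_eq_add] at f1
        rw [norm_mul, norm_mul, Complex.norm_real, Real.norm_eq_abs]
        calc |pot a b n + M| * ‖v n‖ * ‖u n‖ ≤ ε * ‖v n‖ * ‖u n‖ := by gcongr
          _ ≤ _ := by nlinarith [sq_nonneg (‖v n‖ - ‖u n‖)]
  rw [Finset.sum_add_distrib, Finset.sum_add_distrib, ← Finset.mul_sum, ← Finset.mul_sum,
    ← Finset.mul_sum, Finset.sum_add_distrib] at hbound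
  have g1 := mul_le_mul_of_nonneg_left hE hK₂0.le
  have g2 := mul_le_mul_of_nonneg_left hen (by positivity : 0 ≤ 1 / (4 * K₂))
  have g3 : K₂ * (1 / (4 * K₂) * U) = U / 4 := by field_simp
  have g4 : 1 / (4 * K₂) * (K₂ * U) = U / 4 := by field_simp
  have g5 : ε / 2 * (∑ n ∈ Finset.range (N + 1), ‖v n‖ ^ 2 + U) ≤ U / 4 := by
    calc ε / 2 * (∑ n ∈ Finset.range (N + 1), ‖v n‖ ^ 2 + U) ≤ ε / 2 * (K * U + U) := by
          gcongr
          exact hVfin.trans hvK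
      _ = U / 4 := by rw [hε]; field_simp; ring
  linarith

/-- Every point of `[-M, ∞)` is an accumulation point of the spectrum. -/
lemma subset_essSpectrum (a b : ℕ → ℝ) (M : ℝ)
    (hmem : ∀ l : ℝ, -M < l → (l : ℂ) ∈ spectrumW (fun _ => 1) (jacobiAct a b)) :
    (fun r : ℝ => (r : ℂ)) '' Set.Ici (-M) ⊆ essSpectrumW (fun _ => 1) (jacobiAct a b) := by
  rintro _ ⟨x, hx, rfl⟩
  have hx : -M ≤ x := hx
  change AccPt (x : ℂ) (𝓟 _)
  rw [accPt_iff_nhds]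
  intro s hs
  obtain ⟨r, hr, hrs⟩ := Metric.mem_nhds_iff.1 hs
  refine ⟨((x + r / 2 : ℝ) : ℂ), ⟨hrs ?_, hmem _ (by linarith)⟩, ?_⟩
  · rw [Metric.mem_ball, Complex.dist_eq, ← Complex.ofReal_sub, Complex.norm_real,
      Real.norm_eq_abs, abs_lt]
    constructor <;> linarith
  · intro h
    have h' : x + r / 2 = x := by exact_mod_cast h
    linarith

/-- Theorem (towards Chihara's conjecture): under (a)–(d) the essential spectrum of
the Jacobi matrix equals `[-M, ∞)`. -/
theorem jacobi_essential_spectrum_halfline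
    (a b : ℕ → ℝ) (ha : ∀ n, 0 < a n) (M : ℝ)
    (h1 : Tendsto a atTop atTop)
    (h2 : ¬ Summable fun n : ℕ => 1 / a n)
    (h3 : Summable fun n : ℕ => max (-(a (n + 1) / a n - 1)) 0)
    (h4 : Tendsto (fun n => a n - b (n + 1) + a (n + 1)) atTop (𝓝 M)) :
    essSpectrumW (fun _ => 1) (jacobiAct a b) = (fun r : ℝ => (r : ℂ)) '' Set.Ici (-M) := by
  have hpot := pot_tendsto a b M h4
  exact Set.Subset.antisymm (essSpectrum_subset a b ha h2 M hpot)
    (subset_essSpectrum a b M (mem_spectrum a b ha M h1 h2 h3 hpot))
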